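/- Let 1 < q < ∞ and let Ω ⊂ ℝⁿ be a bounded domain. A function f belongs to the grand Sobolev space W^{1,q)}(Ω) if and only if f ∈ L^{q)}(Ω) and there exist a nonnegative function g ∈ L^{q)}(Ω) and a set S ⊂ Ω of Lebesgue measure zero such that |f(x) − f(y)| ≤ |x−y|(g(x) + g(y)) holds for all x, y ∈ Ω ∖ S with B(x, 3|x−y|) ⊂ Ω. -/

import Mathlib

/-!
Write `M` for the maximal function over balls of radius at most `D = diam Ω + 1`, and `h` for
`‖∇f‖` extended by zero outside `Ω`.

*Weak gradient ⇒ pointwise inequality.* Take `g = C · M h`. For a bump `φ` of mass one supported in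
the unit ball, the bump average `F(t) = ∫ f(z) t⁻ⁿ φ((z - x)/t) dz` tends to `f x` as `t → 0` at
every Lebesgue point (`tendsto_bump_average`), and testing the weak gradient with
`φ((z - x)/t) (z - x)_k / t` shows that `F'(t)` is an average of `∇f` over `B(x, t)`
(`hasDerivAt_bump_average`, `weak_identity`), hence `|f x - F(d)| ≤ C d M h(x)`
(`sub_bump_average_le`). For two points at distance `d` one chooses the two bumps so that both
averages at scale `d` are the same average around the midpoint; the supports lie in `B(x, 3 d) ⊆ Ω`.
The operator `M` preserves the grand Lebesgue space (`grandLNorm_maxFn_ne_top`): its `L^p` bound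
(`strong_type`) is uniform for `p` between `(q + 1)/2` and `q`, and the smaller exponents are
controlled by `(q + 1)/2` because `Ω` has finite measure.

*Pointwise inequality ⇒ weak gradient.* Moving difference quotients from `f` onto a test function
and letting the step tend to zero gives `|∫ f ∂ₖφ| ≤ 2 ∫ g |φ|` (`abs_integral_fderiv_le`). By
Cauchy–Schwarz the left side is a bounded functional of `φ √g ∈ L²(Ω)`; extending it by Hahn–Banach
and representing it by Riesz yields `∂ₖf = F √g` with `F ∈ L²(Ω)` (`exists_weak_deriv`). Testing
with shrinking bumps at Lebesgue points then gives `|∂ₖf| ≤ 2 g` almost everywhere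
(`ae_abs_le_of_weak_bound`), so `∇f` has finite grand norm.

Throughout, finiteness of a grand norm is used in the equivalent form that the quantities
`ε ∫ |f|^{q-ε}` are uniformly bounded, without the roots (`grandLNorm_ne_top_iff`).
-/

open MeasureTheory Metric Set ENNReal

/-- The Lebesgue norm `‖f‖_{L^p(Ω)} = (∫_Ω |f|^p dx)^{1/p}`. -/
noncomputable def lqNorm {n : ℕ} (p : ℝ) (Ω : Set (EuclideanSpace ℝ (Fin n)))
    (f : EuclideanSpace ℝ (Fin n) → ℝ) : ℝ≥0∞ :=
  (∫⁻ x in Ω, ENNReal.ofReal |f x| ^ p) ^ (1 / p)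

/-- The grand Lebesgue norm
`‖g‖_{L^{q)}(Ω)} = sup_{0<ε<q−1} (ε ∫_Ω |g|^{q−ε} dx)^{1/(q−ε)}`. -/
noncomputable def grandLNorm {n : ℕ} (q : ℝ) (Ω : Set (EuclideanSpace ℝ (Fin n)))
    (f : EuclideanSpace ℝ (Fin n) → ℝ) : ℝ≥0∞ :=
  ⨆ (ε : ℝ) (_ : ε ∈ Set.Ioo (0 : ℝ) (q - 1)),
    (ENNReal.ofReal ε * ∫⁻ x in Ω, ENNReal.ofReal |f x| ^ (q - ε)) ^ (1 / (q - ε))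

/-- The grand Sobolev norm
`‖f‖_{W^{1,q)}(Ω)} = sup_{0<ε<q−1} ε^{1/(q−ε)} ‖f‖_{W^{1,q−ε}(Ω)}`, where
`‖f‖_{W^{1,p}(Ω)} = ‖f‖_{L^p(Ω)} + ‖∇f‖_{L^p(Ω)}` and `gf = ∇f`. -/
noncomputable def grandSobNorm {n : ℕ} (q : ℝ) (Ω : Set (EuclideanSpace ℝ (Fin n)))
    (f : EuclideanSpace ℝ (Fin n) → ℝ)
    (gf : EuclideanSpace ℝ (Fin n) → EuclideanSpace ℝ (Fin n)) : ℝ≥0∞ :=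
  ⨆ (ε : ℝ) (_ : ε ∈ Set.Ioo (0 : ℝ) (q - 1)),
    ENNReal.ofReal (ε ^ (1 / (q - ε))) *
      (lqNorm (q - ε) Ω f + lqNorm (q - ε) Ω (fun x => ‖gf x‖))

/-- `gf : Ω → ℝⁿ` is a weak gradient of `f : Ω → ℝ` on an open set `Ω ⊆ ℝⁿ`. -/
def IsWeakGradOn {n : ℕ} (f : EuclideanSpace ℝ (Fin n) → ℝ)
    (gf : EuclideanSpace ℝ (Fin n) → EuclideanSpace ℝ (Fin n))
    (Ω : Set (EuclideanSpace ℝ (Fin n))) : Prop :=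
  LocallyIntegrableOn f Ω volume ∧ LocallyIntegrableOn gf Ω volume ∧
    ∀ φ : EuclideanSpace ℝ (Fin n) → ℝ, ContDiff ℝ (⊤ : ℕ∞) φ → HasCompactSupport φ →
      tsupport φ ⊆ Ω → ∀ k : Fin n,
        ∫ x in Ω, f x * fderiv ℝ φ x (EuclideanSpace.single k 1)
          = - ∫ x in Ω, gf x k * φ x

/-! ### Finiteness of grand norms -/

/-- The roots are harmless for finiteness, since `1 / (q - ε)` stays between `1 / q` and `1`. -/
lemma grandLNorm_ne_top_iff {n : ℕ} {q : ℝ} {Ω : Set (EuclideanSpace ℝ (Fin n))}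
    {f : EuclideanSpace ℝ (Fin n) → ℝ} :
    grandLNorm q Ω f ≠ ⊤ ↔ ∃ C : ℝ≥0∞, C ≠ ⊤ ∧ ∀ ε ∈ Set.Ioo (0 : ℝ) (q - 1),
      ENNReal.ofReal ε * ∫⁻ x in Ω, ENNReal.ofReal |f x| ^ (q - ε) ≤ C := by
  constructor
  · intro h
    refine ⟨(max 1 (grandLNorm q Ω f)) ^ q, ?_, fun ε hε => ?_⟩
    · by_cases hq : 0 ≤ q
      · exact ENNReal.rpow_ne_top_of_nonneg hq (by simp [h])
      · refine ENNReal.rpow_ne_top_of_ne_zero (by simp) (by simp [h])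
    · have hp : 0 < q - ε := by linarith [hε.2]
      have h1 : (ENNReal.ofReal ε * ∫⁻ x in Ω, ENNReal.ofReal |f x| ^ (q - ε)) ^ (1 / (q - ε))
          ≤ grandLNorm q Ω f := le_iSup₂ (f := fun (ε : ℝ) (_ : ε ∈ Set.Ioo (0 : ℝ) (q - 1)) =>
        (ENNReal.ofReal ε * ∫⁻ x in Ω, ENNReal.ofReal |f x| ^ (q - ε)) ^ (1 / (q - ε))) ε hε
      rw [one_div, ENNReal.rpow_inv_le_iff hp] at h1
      calc _ ≤ _ := h1
        _ ≤ (max 1 (grandLNorm q Ω f)) ^ (q - ε) :=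
          ENNReal.rpow_le_rpow (le_max_right _ _) hp.le
        _ ≤ _ := ENNReal.rpow_le_rpow_of_exponent_le (le_max_left _ _) (by linarith [hε.1])
  · rintro ⟨C, hC, h⟩
    refine ne_top_of_le_ne_top (b := max 1 C) (by simp [hC]) (iSup₂_le fun ε hε => ?_)
    have hp : 1 < q - ε := by linarith [hε.2]
    calc _ ≤ (max 1 C) ^ (1 / (q - ε)) :=
          ENNReal.rpow_le_rpow ((h ε hε).trans (le_max_right _ _)) (by positivity)
      _ ≤ (max 1 C) ^ (1 : ℝ) := ENNReal.rpow_le_rpow_of_exponent_le (le_max_left _ _)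
          (by rw [div_le_one (by linarith)]; exact hp.le)
      _ = _ := by simp

lemma grandSobNorm_ne_top_iff {n : ℕ} {q : ℝ} {Ω : Set (EuclideanSpace ℝ (Fin n))}
    {f : EuclideanSpace ℝ (Fin n) → ℝ}
    {gf : EuclideanSpace ℝ (Fin n) → EuclideanSpace ℝ (Fin n)} :
    grandSobNorm q Ω f gf ≠ ⊤ ↔
      grandLNorm q Ω f ≠ ⊤ ∧ grandLNorm q Ω (fun x => ‖gf x‖) ≠ ⊤ := by
  have key : ∀ u : EuclideanSpace ℝ (Fin n) → ℝ, ∀ ε ∈ Set.Ioo (0 : ℝ) (q - 1),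
      ENNReal.ofReal (ε ^ (1 / (q - ε))) * lqNorm (q - ε) Ω u =
      (ENNReal.ofReal ε * ∫⁻ x in Ω, ENNReal.ofReal |u x| ^ (q - ε)) ^ (1 / (q - ε)) := by
    intro u ε hε
    have hp : 0 < q - ε := by linarith [hε.2]
    rw [ENNReal.mul_rpow_of_nonneg _ _ (by positivity),
      ENNReal.ofReal_rpow_of_nonneg hε.1.le (by positivity)]
    rfl
  constructor
  · intro h
    refine ⟨ne_top_of_le_ne_top h (iSup₂_mono fun ε hε => ?_),
      ne_top_of_le_ne_top h (iSup₂_mono fun ε hε => ?_)⟩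
    · rw [← key f ε hε]; gcongr; exact le_self_add
    · rw [← key _ ε hε]; gcongr; exact le_add_self
  · rintro ⟨h1, h2⟩
    refine ne_top_of_le_ne_top (b := grandLNorm q Ω f + grandLNorm q Ω (fun x => ‖gf x‖))
      (by simp [h1, h2]) (iSup₂_le fun ε hε => ?_)
    rw [mul_add, key f ε hε, key _ ε hε]
    gcongr
    · exact le_iSup₂ (f := fun (ε : ℝ) (_ : ε ∈ Set.Ioo (0 : ℝ) (q - 1)) =>
        (ENNReal.ofReal ε * ∫⁻ x in Ω, ENNReal.ofReal |f x| ^ (q - ε)) ^ (1 / (q - ε))) ε hε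
    · exact le_iSup₂ (f := fun (ε : ℝ) (_ : ε ∈ Set.Ioo (0 : ℝ) (q - 1)) =>
        (ENNReal.ofReal ε * ∫⁻ x in Ω, ENNReal.ofReal |‖gf x‖| ^ (q - ε)) ^ (1 / (q - ε))) ε hε

/-- The grand norm controls the ordinary `L^p` integral for every `1 < p < q`. -/
lemma lintegral_rpow_ne_top {n : ℕ} {q : ℝ} {Ω : Set (EuclideanSpace ℝ (Fin n))}
    {f : EuclideanSpace ℝ (Fin n) → ℝ} (h : grandLNorm q Ω f ≠ ⊤) {p : ℝ} (hp : p ∈ Ioo 1 q) :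
    ∫⁻ x in Ω, ENNReal.ofReal |f x| ^ p ≠ ⊤ := by
  obtain ⟨C, hC, hf⟩ := grandLNorm_ne_top_iff.1 h
  have h1 := hf (q - p) ⟨by linarith [hp.2], by linarith [hp.1]⟩
  rw [_root_.sub_sub_cancel] at h1
  intro htop
  rw [htop, ENNReal.mul_top (by simpa using hp.2)] at h1
  exact hC (top_le_iff.1 h1)

lemma ofReal_rpow_le_one_add {a s p : ℝ} (hs : 0 ≤ s) (hsp : s ≤ p) :
    ENNReal.ofReal a ^ s ≤ 1 + ENNReal.ofReal a ^ p := by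
  rcases le_total (ENNReal.ofReal a) 1 with h | h
  · exact (ENNReal.rpow_le_one h hs).trans le_self_add
  · exact (ENNReal.rpow_le_rpow_of_exponent_le h hsp).trans le_add_self

lemma integrableOn_of_grandLNorm {n : ℕ} {q : ℝ} (hq : 1 < q)
    {Ω : Set (EuclideanSpace ℝ (Fin n))} (hΩ : volume Ω ≠ ⊤)
    {f : EuclideanSpace ℝ (Fin n) → ℝ} (hm : AEMeasurable f (volume.restrict Ω))
    (h : grandLNorm q Ω f ≠ ⊤) : IntegrableOn f Ω := by
  have h2 := lintegral_rpow_ne_top h (p := (q + 1) / 2) ⟨by linarith, by linarith⟩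
  refine ⟨hm.aestronglyMeasurable, ?_⟩
  rw [hasFiniteIntegral_iff_norm]
  calc ∫⁻ x in Ω, ENNReal.ofReal ‖f x‖
      ≤ ∫⁻ x in Ω, (1 + ENNReal.ofReal |f x| ^ ((q + 1) / 2)) := by
        refine lintegral_mono fun x => ?_
        simpa using ofReal_rpow_le_one_add (a := |f x|) (s := 1) (p := (q + 1) / 2) zero_le_one
          (by linarith)
    _ < ⊤ := by
        rw [lintegral_add_left measurable_const]
        simpa [lt_top_iff_ne_top] using ⟨hΩ, h2⟩

/-- Domination by a multiple preserves finiteness of the grand norm. -/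
lemma grandLNorm_ne_top_of_le {n : ℕ} {q : ℝ} {Ω : Set (EuclideanSpace ℝ (Fin n))}
    {u v : EuclideanSpace ℝ (Fin n) → ℝ} (c : ℝ)
    (huv : ∀ᵐ x ∂(volume.restrict Ω), |u x| ≤ c * |v x|)
    (h : grandLNorm q Ω v ≠ ⊤) : grandLNorm q Ω u ≠ ⊤ := by
  obtain ⟨C, hC, hv⟩ := grandLNorm_ne_top_iff.1 h
  have hc : 1 ≤ max 1 (ENNReal.ofReal c) := le_max_left _ _
  have hc' : (max 1 (ENNReal.ofReal c)) ≠ ⊤ := by simp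
  have hcq : ∀ {s : ℝ}, (max 1 (ENNReal.ofReal c)) ^ s ≠ ⊤ :=
    fun {s} => ENNReal.rpow_ne_top_of_ne_zero (by simp) hc'
  refine grandLNorm_ne_top_iff.2 ⟨(max 1 (ENNReal.ofReal c)) ^ q * C, ?_, fun ε hε => ?_⟩
  · exact ENNReal.mul_ne_top hcq hC
  · have hp : 0 < q - ε := by linarith [hε.2]
    calc ENNReal.ofReal ε * ∫⁻ x in Ω, ENNReal.ofReal |u x| ^ (q - ε)
        ≤ ENNReal.ofReal ε * ∫⁻ x in Ω, (max 1 (ENNReal.ofReal c)) ^ q *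
            ENNReal.ofReal |v x| ^ (q - ε) := by
          refine mul_le_mul_right ?_ _
          refine lintegral_mono_ae ?_
          filter_upwards [huv] with x hx
          calc ENNReal.ofReal |u x| ^ (q - ε)
              ≤ (max 1 (ENNReal.ofReal c) * ENNReal.ofReal |v x|) ^ (q - ε) := by
                refine ENNReal.rpow_le_rpow ?_ hp.le
                refine (ENNReal.ofReal_le_ofReal hx).trans ?_
                rw [ENNReal.ofReal_mul' (abs_nonneg _)]
                gcongr
                exact le_max_right _ _
            _ = (max 1 (ENNReal.ofReal c)) ^ (q - ε) * ENNReal.ofReal |v x| ^ (q - ε) :=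
                ENNReal.mul_rpow_of_nonneg _ _ hp.le
            _ ≤ _ := by
                gcongr
                linarith [hε.1]
      _ = (max 1 (ENNReal.ofReal c)) ^ q *
          (ENNReal.ofReal ε * ∫⁻ x in Ω, ENNReal.ofReal |v x| ^ (q - ε)) := by
          rw [lintegral_const_mul' _ _ hcq]; ring
      _ ≤ _ := by gcongr; exact hv ε hε

/-! ### The maximal operator -/

/-- The centred Hardy–Littlewood maximal function over balls of rational radius at most `D`;
rational radii make it a countable supremum, so measurability is immediate. -/
noncomputable def maxFn {n : ℕ} (D : ℝ) (h : EuclideanSpace ℝ (Fin n) → ℝ≥0∞)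
    (x : EuclideanSpace ℝ (Fin n)) : ℝ≥0∞ :=
  ⨆ r : {r : ℚ // 0 < r ∧ (r : ℝ) ≤ D}, (volume (ball x (r : ℝ)))⁻¹ * ∫⁻ z in ball x (r : ℝ), h z

lemma measurable_maxFn {n : ℕ} (D : ℝ) {h : EuclideanSpace ℝ (Fin n) → ℝ≥0∞}
    (hh : Measurable h) : Measurable (maxFn D h) := by
  refine Measurable.iSup fun r => ?_
  simp_rw [Measure.addHaar_ball_center volume _ (r : ℝ)]
  refine Measurable.const_mul ?_ _
  have : ∀ x : EuclideanSpace ℝ (Fin n), ∫⁻ z in ball x (r : ℝ), h z =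
      ∫⁻ z, ({p : EuclideanSpace ℝ (Fin n) × EuclideanSpace ℝ (Fin n) |
        dist p.2 p.1 < (r : ℝ)}.indicator (fun p => h p.2)) (x, z) := by
    intro x
    rw [← lintegral_indicator measurableSet_ball]
    rfl
  simp_rw [this]
  refine Measurable.lintegral_prod_right' (Measurable.indicator (by fun_prop) ?_)
  exact measurableSet_lt (by fun_prop) measurable_const

lemma volume_ball_ne {n : ℕ} (x : EuclideanSpace ℝ (Fin n)) {r : ℝ} (hr : 0 < r) :
    volume (ball x r) ≠ 0 ∧ volume (ball x r) ≠ ⊤ :=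
  ⟨(measure_ball_pos _ _ hr).ne', measure_ball_lt_top.ne⟩

/-- The weak type `(1,1)` estimate, by Vitali's covering theorem with dilation factor `5`. -/
lemma weak_type {n : ℕ} (D : ℝ) (h : EuclideanSpace ℝ (Fin n) → ℝ≥0∞) (l : ℝ≥0∞) :
    l * volume {x | l < maxFn D h x} ≤ 5 ^ n * ∫⁻ z, h z := by
  set A := {x | l < maxFn D h x} with hA
  have hex : ∀ x ∈ A, ∃ r : ℝ, 0 < r ∧ r ≤ D ∧ l * volume (ball x r) ≤ ∫⁻ z in ball x r, h z := by
    intro x hx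
    have hx' : l < maxFn D h x := hx
    obtain ⟨⟨r, hr, hrD⟩, h1⟩ := lt_iSup_iff.1 hx'
    have hr' : (0 : ℝ) < r := by exact_mod_cast hr
    refine ⟨r, hr', hrD, ?_⟩
    have h2 := volume_ball_ne x hr'
    rw [mul_comm, ← div_eq_mul_inv] at h1
    exact (ENNReal.le_div_iff_mul_le (Or.inl h2.1) (Or.inl h2.2)).1 h1.le
  choose! r hr hrD hint using hex
  obtain ⟨u, huA, hdisj, hcov⟩ := Vitali.exists_disjoint_subfamily_covering_enlargement_closedBall
    A id r D hrD 5 (by norm_num)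
  have hdisj' : u.PairwiseDisjoint fun a => ball a (r a) :=
    hdisj.mono fun a => ball_subset_closedBall
  have hcount : u.Countable := hdisj'.countable_of_isOpen (fun _ _ => isOpen_ball)
    fun a ha => nonempty_ball.2 (hr a (huA ha))
  have hsub : A ⊆ ⋃ b ∈ u, closedBall b (5 * r b) := by
    intro x hx
    obtain ⟨b, hb, hxb⟩ := hcov x hx
    exact mem_biUnion hb (hxb (mem_closedBall_self (hr x hx).le))
  have hvol : ∀ b ∈ u, volume (closedBall b (5 * r b)) = 5 ^ n * volume (ball b (r b)) := by
    intro b hb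
    have := hr b (huA hb)
    rw [Measure.addHaar_closedBall _ _ (by positivity), Measure.addHaar_ball_of_pos _ _ this,
      mul_pow, ENNReal.ofReal_mul (by positivity), ENNReal.ofReal_pow (by norm_num), mul_assoc]
    simp
  have := hcount.to_subtype
  calc l * volume A ≤ l * ∑' b : u, volume (closedBall (b : EuclideanSpace ℝ (Fin n)) (5 * r b)) := by
        gcongr
        exact (measure_mono hsub).trans (measure_biUnion_le _ hcount _)
    _ = ∑' b : u, 5 ^ n * (l * volume (ball (b : EuclideanSpace ℝ (Fin n)) (r b))) := by
        rw [← ENNReal.tsum_mul_left]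
        refine tsum_congr fun b => ?_
        rw [hvol b b.2]; ring
    _ ≤ ∑' b : u, 5 ^ n * ∫⁻ z in ball (b : EuclideanSpace ℝ (Fin n)) (r b), h z :=
        ENNReal.tsum_le_tsum fun b => by gcongr; exact hint b (huA b.2)
    _ = 5 ^ n * ∫⁻ z in ⋃ b ∈ u, ball b (r b), h z := by
        rw [ENNReal.tsum_mul_left, lintegral_biUnion hcount (fun _ _ => measurableSet_ball) hdisj']
    _ ≤ _ := by exact mul_le_mul_right (setLIntegral_le_lintegral _ _) _

lemma maxFn_ae_lt_top {n : ℕ} (D : ℝ) {h : EuclideanSpace ℝ (Fin n) → ℝ≥0∞}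
    (hint : ∫⁻ z, h z ≠ ⊤) : ∀ᵐ x, maxFn D h x < ⊤ := by
  have hC : 5 ^ n * ∫⁻ z, h z ≠ ⊤ := ENNReal.mul_ne_top (by finiteness) hint
  rw [ae_iff]
  by_contra hne
  set s := {x | ¬ maxFn D h x < ⊤} with hs
  have key : ∀ k : ℕ, (k : ℝ≥0∞) * volume s ≤ 5 ^ n * ∫⁻ z, h z := by
    intro k
    refine le_trans ?_ (weak_type D h k)
    gcongr
    intro x hx
    simp only [hs, mem_ofPred_eq, not_lt, top_le_iff] at hx
    simp [hx]
  obtain ⟨k, hk⟩ := ENNReal.exists_nat_mul_gt hne hC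
  exact absurd (key k) (not_le.2 hk)

/-- Discarding the part of `h` below `l` loses at most `l` in the maximal function. -/
lemma maxFn_le_add {n : ℕ} (D : ℝ) (h : EuclideanSpace ℝ (Fin n) → ℝ≥0∞)
    (l : ℝ≥0∞) (x : EuclideanSpace ℝ (Fin n)) :
    maxFn D h x ≤ maxFn D ({z | l < h z}.indicator h) x + l := by
  refine iSup_le fun r => ?_
  have hr : (0 : ℝ) < r.1 := by exact_mod_cast r.2.1
  have h2 := volume_ball_ne x hr
  calc (volume (ball x (r.1 : ℝ)))⁻¹ * ∫⁻ z in ball x (r.1 : ℝ), h z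
      ≤ (volume (ball x (r.1 : ℝ)))⁻¹ * ∫⁻ z in ball x (r.1 : ℝ),
          ({z | l < h z}.indicator h z + l) := by
        gcongr with z
        by_cases hz : l < h z
        · simp [indicator, hz]
        · have : h z ≤ l := not_lt.1 hz
          simp [indicator, hz, this]
    _ = (volume (ball x (r.1 : ℝ)))⁻¹ * (∫⁻ z in ball x (r.1 : ℝ),
          {z | l < h z}.indicator h z) + l := by
        rw [lintegral_add_right _ measurable_const, mul_add, setLIntegral_const, mul_comm l,
          ← mul_assoc, ENNReal.inv_mul_cancel h2.1 h2.2, one_mul]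
    _ ≤ _ := by
        gcongr
        exact le_iSup (fun r : {r : ℚ // 0 < r ∧ (r : ℝ) ≤ D} => (volume (ball x (r : ℝ)))⁻¹ *
          ∫⁻ z in ball x (r : ℝ), {z | l < h z}.indicator h z) r

/-- The weak type estimate applied to the part of `h` above the level `l`. -/
lemma volume_maxFn_gt_le {n : ℕ} (D : ℝ) {h : EuclideanSpace ℝ (Fin n) → ℝ≥0∞}
    (hh : Measurable h) (l : ℝ≥0∞) :
    l * volume {x | 2 * l < maxFn D h x} ≤ 5 ^ n * ∫⁻ z in {z | l < h z}, h z := by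
  rw [← lintegral_indicator (measurableSet_lt measurable_const hh)]
  refine le_trans ?_ (weak_type D _ l)
  gcongr l * volume ?_
  intro x hx
  by_contra hcon
  simp only [mem_ofPred_eq, not_lt] at hx hcon
  have := (maxFn_le_add D h l x).trans (add_le_add_left hcon l)
  rw [← two_mul] at this
  exact absurd hx (not_lt.2 this)

/-- The strong type `(p,p)` estimate for `p > 1`, with a constant that stays bounded as long as
`p` stays away from `1` and `∞`. -/
lemma strong_type {n : ℕ} (D : ℝ) {h : EuclideanSpace ℝ (Fin n) → ℝ}
    (hh : Measurable h) (h0 : ∀ x, 0 ≤ h x) {p : ℝ} (hp : 1 < p) :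
    ∫⁻ x, ENNReal.ofReal |(maxFn D (fun z => ENNReal.ofReal (h z)) x).toReal| ^ p ≤
      ENNReal.ofReal (2 * p * 2 ^ (p - 1) / (p - 1)) * 5 ^ n *
        ∫⁻ z, ENNReal.ofReal |h z| ^ p := by
  set H : EuclideanSpace ℝ (Fin n) → ℝ≥0∞ := fun z => ENNReal.ofReal (h z) with hH
  have hHm : Measurable H := hh.ennreal_ofReal
  set G : EuclideanSpace ℝ (Fin n) → ℝ := fun x => (maxFn D H x).toReal with hG
  have hGm : Measurable G := (measurable_maxFn D hHm).ennreal_toReal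
  have hG0 : ∀ x, 0 ≤ G x := fun x => ENNReal.toReal_nonneg
  -- the truncated weak type estimate at height `t`
  have hwk : ∀ t : ℝ, 0 < t → volume {x | t < G x} * ENNReal.ofReal (t ^ (p - 1)) ≤
      5 ^ n * (2 * ∫⁻ z, {z | t / 2 < h z}.indicator (fun z => H z * ENNReal.ofReal (t ^ (p - 2))) z) := by
    intro t ht
    have h1 := volume_maxFn_gt_le D hHm (ENNReal.ofReal (t / 2))
    have hset : {z | ENNReal.ofReal (t / 2) < H z} = {z | t / 2 < h z} := by
      ext z
      simp only [mem_ofPred_eq, hH]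
      exact ENNReal.ofReal_lt_ofReal_iff_of_nonneg (by positivity)
    have hsub : {x | t < G x} ⊆ {x | 2 * ENNReal.ofReal (t / 2) < maxFn D H x} := by
      intro x hx
      have h2 : 2 * ENNReal.ofReal (t / 2) = ENNReal.ofReal t := by
        rw [show (2 : ℝ≥0∞) = ENNReal.ofReal 2 by simp, ← ENNReal.ofReal_mul (by norm_num)]
        congr 1; ring
      simp only [mem_ofPred_eq, h2]
      exact (ENNReal.ofReal_lt_iff_lt_toReal ht.le
        (fun h => by simp [hG, h] at hx; linarith)).2 hx
    rw [hset] at h1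
    have h3 : ENNReal.ofReal (t ^ (p - 1)) =
        2 * (ENNReal.ofReal (t / 2) * ENNReal.ofReal (t ^ (p - 2))) := by
      rw [show (2 : ℝ≥0∞) = ENNReal.ofReal 2 by simp, ← ENNReal.ofReal_mul (by positivity),
        ← ENNReal.ofReal_mul (by norm_num), show p - 1 = (p - 2) + 1 by ring,
        Real.rpow_add_one ht.ne']
      congr 1; ring
    have hms : MeasurableSet {z | t / 2 < h z} := measurableSet_lt measurable_const hh
    rw [lintegral_indicator hms, lintegral_mul_const _ hHm, h3]
    calc _ ≤ volume {x | 2 * ENNReal.ofReal (t / 2) < maxFn D H x} *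
          (2 * (ENNReal.ofReal (t / 2) * ENNReal.ofReal (t ^ (p - 2)))) := by gcongr
      _ = 2 * ENNReal.ofReal (t ^ (p - 2)) * (ENNReal.ofReal (t / 2) *
          volume {x | 2 * ENNReal.ofReal (t / 2) < maxFn D H x}) := by ring
      _ ≤ 2 * ENNReal.ofReal (t ^ (p - 2)) * (5 ^ n * ∫⁻ z in {z | t / 2 < h z}, H z) := by
          gcongr
      _ = _ := by ring
  have hinner : ∀ z, ∫⁻ t in Ioi (0 : ℝ), {z | t / 2 < h z}.indicator
      (fun z => H z * ENNReal.ofReal (t ^ (p - 2))) z =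
      ENNReal.ofReal (2 ^ (p - 1) / (p - 1)) * ENNReal.ofReal |h z| ^ p := by
    intro z
    have e1 : ∀ t : ℝ, {z | t / 2 < h z}.indicator
        (fun z => H z * ENNReal.ofReal (t ^ (p - 2))) z =
        (Iio (2 * h z)).indicator (fun t => H z * ENNReal.ofReal (t ^ (p - 2))) t := by
      intro t
      simp only [indicator, mem_ofPred_eq, mem_Iio]
      congr 1
      rw [div_lt_iff₀ (by norm_num), mul_comm]
    simp_rw [e1]
    have h2z : 0 ≤ 2 * h z := by linarith [h0 z]
    have hii : IntervalIntegrable (fun t : ℝ => t ^ (p - 2)) volume 0 (2 * h z) :=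
      intervalIntegral.intervalIntegrable_rpow' (by linarith)
    rw [lintegral_indicator measurableSet_Iio, Measure.restrict_restrict measurableSet_Iio,
      Set.inter_comm, Ioi_inter_Iio, lintegral_const_mul _ (by fun_prop),
      restrict_Ioo_eq_restrict_Ioc, ← ofReal_integral_eq_lintegral_ofReal
        ((intervalIntegrable_iff_integrableOn_Ioc_of_le h2z).1 hii)
        ((ae_restrict_iff' measurableSet_Ioc).2 (ae_of_all _ fun t ht => Real.rpow_nonneg ht.1.le _)),
      ← intervalIntegral.integral_of_le h2z, integral_rpow (Or.inl (by linarith)),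
      show p - 2 + 1 = p - 1 by ring, Real.zero_rpow (by linarith), sub_zero,
      Real.mul_rpow (by norm_num) (h0 z), abs_of_nonneg (h0 z),
      ENNReal.ofReal_rpow_of_nonneg (h0 z) (by linarith), ← ENNReal.ofReal_mul (h0 z),
      ← ENNReal.ofReal_mul (by have : 0 < p - 1 := by linarith
                               positivity)]
    congr 1
    have : h z ^ p = h z * h z ^ (p - 1) := by
      rcases (h0 z).eq_or_lt with h | h
      · rw [← h, Real.zero_rpow (by linarith)]; simp
      · rw [mul_comm, ← Real.rpow_add_one h.ne']; congr 1; ring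
    rw [this]; ring
  calc ∫⁻ x, ENNReal.ofReal |G x| ^ p = ∫⁻ x, ENNReal.ofReal (G x ^ p) := by
        refine lintegral_congr fun x => ?_
        rw [abs_of_nonneg (hG0 x), ENNReal.ofReal_rpow_of_nonneg (hG0 x) (by linarith)]
    _ = ENNReal.ofReal p * ∫⁻ t in Ioi (0 : ℝ),
          volume {x | t < G x} * ENNReal.ofReal (t ^ (p - 1)) :=
        lintegral_rpow_eq_lintegral_meas_lt_mul _ (ae_of_all _ hG0) hGm.aemeasurable (by linarith)
    _ ≤ ENNReal.ofReal p * ∫⁻ t in Ioi (0 : ℝ), 5 ^ n * (2 * ∫⁻ z,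
          {z | t / 2 < h z}.indicator (fun z => H z * ENNReal.ofReal (t ^ (p - 2))) z) := by
        gcongr ENNReal.ofReal p * ?_
        exact setLIntegral_mono' measurableSet_Ioi hwk
    _ = ENNReal.ofReal p * (5 ^ n * (2 * ∫⁻ z, ∫⁻ t in Ioi (0 : ℝ),
          {z | t / 2 < h z}.indicator (fun z => H z * ENNReal.ofReal (t ^ (p - 2))) z)) := by
        rw [lintegral_const_mul' _ _ (by finiteness), lintegral_const_mul' _ _ (by finiteness),
          lintegral_lintegral_swap]
        refine Measurable.aemeasurable ?_
        refine Measurable.indicator (f := fun q : ℝ × EuclideanSpace ℝ (Fin n) =>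
          H q.2 * ENNReal.ofReal (q.1 ^ (p - 2))) (s := {q | q.1 / 2 < h q.2}) ?_ ?_
        · fun_prop
        · exact measurableSet_lt (by fun_prop) (by fun_prop)
    _ = _ := by
        simp_rw [hinner]
        rw [lintegral_const_mul' _ _ (by finiteness)]
        have hp1 : 0 < p - 1 := by linarith
        rw [show 2 * p * 2 ^ (p - 1) / (p - 1) = p * (2 * (2 ^ (p - 1) / (p - 1))) by ring,
          ENNReal.ofReal_mul (by linarith), ENNReal.ofReal_mul (by norm_num)]
        simp only [ENNReal.ofReal_ofNat]
        ring

/-- The maximal operator is bounded on the grand Lebesgue space. -/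
lemma grandLNorm_maxFn_ne_top {n : ℕ} {q : ℝ} (hq : 1 < q) (D : ℝ)
    {Ω : Set (EuclideanSpace ℝ (Fin n))} (hΩ : volume Ω ≠ ⊤)
    {h : EuclideanSpace ℝ (Fin n) → ℝ} (hh : Measurable h) (h0 : ∀ x, 0 ≤ h x)
    (hsupp : ∀ x ∉ Ω, h x = 0) (hN : grandLNorm q Ω h ≠ ⊤) :
    grandLNorm q Ω (fun x => (maxFn D (fun z => ENNReal.ofReal (h z)) x).toReal) ≠ ⊤ := by
  obtain ⟨C, hC, hK⟩ := grandLNorm_ne_top_iff.1 hN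
  set G : EuclideanSpace ℝ (Fin n) → ℝ :=
    fun x => (maxFn D (fun z => ENNReal.ofReal (h z)) x).toReal with hG
  set p₀ := (q + 1) / 2 with hp₀
  have hp₀1 : 1 < p₀ := by linarith
  have hp₀q : p₀ < q := by linarith
  set A : ℝ≥0∞ := ENNReal.ofReal (2 * q * 2 ^ (q - 1) / (p₀ - 1)) * 5 ^ n with hA
  have hAtop : A ≠ ⊤ := by finiteness
  -- the constant of the strong type estimate is uniform for `p₀ ≤ p ≤ q`
  have hst : ∀ p, p₀ ≤ p → p ≤ q → ∫⁻ x in Ω, ENNReal.ofReal |G x| ^ p ≤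
      A * ∫⁻ z in Ω, ENNReal.ofReal |h z| ^ p := by
    intro p hp hpq
    have hp1 : 0 < p₀ - 1 := by linarith
    have hp2 : 0 < p - 1 := by linarith
    have e : ∫⁻ z in Ω, ENNReal.ofReal |h z| ^ p = ∫⁻ z, ENNReal.ofReal |h z| ^ p := by
      refine setLIntegral_eq_of_support_subset ?_
      intro z hz
      by_contra hzΩ
      exact hz (by simp [hsupp z hzΩ, ENNReal.zero_rpow_of_pos (show 0 < p by linarith)])
    rw [e]
    refine (setLIntegral_le_lintegral _ _).trans
      ((strong_type D hh h0 (show 1 < p by linarith)).trans ?_)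
    rw [hA]
    gcongr
    norm_num
  have hfin : ∫⁻ x in Ω, ENNReal.ofReal |G x| ^ p₀ ≠ ⊤ :=
    ne_top_of_le_ne_top (ENNReal.mul_ne_top hAtop (lintegral_rpow_ne_top hN ⟨hp₀1, hp₀q⟩))
      (hst p₀ le_rfl hp₀q.le)
  refine grandLNorm_ne_top_iff.2 ⟨A * C + ENNReal.ofReal q *
    (volume Ω + ∫⁻ x in Ω, ENNReal.ofReal |G x| ^ p₀), by finiteness, fun ε hε => ?_⟩
  rcases le_total p₀ (q - ε) with hp | hp
  · refine le_trans ?_ le_self_add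
    calc _ ≤ ENNReal.ofReal ε * (A * ∫⁻ z in Ω, ENNReal.ofReal |h z| ^ (q - ε)) := by
          gcongr
          exact hst _ hp (by linarith [hε.1])
      _ = A * (ENNReal.ofReal ε * ∫⁻ z in Ω, ENNReal.ofReal |h z| ^ (q - ε)) := by ring
      _ ≤ _ := by gcongr; exact hK ε hε
  · refine le_trans ?_ le_add_self
    gcongr
    · linarith [hε.2]
    · calc _ ≤ ∫⁻ x in Ω, (1 + ENNReal.ofReal |G x| ^ p₀) :=
            lintegral_mono fun x => ofReal_rpow_le_one_add (by linarith [hε.2]) hp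
        _ = _ := by rw [lintegral_add_left measurable_const]; simp

/-! ### Bump averages -/

/-- Averages against shrinking dilates of a bump function converge at Lebesgue points. -/
lemma tendsto_bump_average {n : ℕ} {u : EuclideanSpace ℝ (Fin n) → ℝ} (hu : Integrable u)
    {x : EuclideanSpace ℝ (Fin n)}
    (hx : Filter.Tendsto (fun r : ℝ => ⨍ y in closedBall x r, ‖u y - u x‖)
      (nhdsWithin 0 (Ioi 0)) (nhds 0))
    {φ : EuclideanSpace ℝ (Fin n) → ℝ} (hφ : Continuous φ) (hsupp : ∀ w, 1 < ‖w‖ → φ w = 0)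
    (hone : ∫ w, φ w = 1) :
    Filter.Tendsto (fun t : ℝ => ∫ z, u z * ((t ^ n)⁻¹ * φ (t⁻¹ • (z - x))))
      (nhdsWithin 0 (Ioi 0)) (nhds (u x)) := by
  have hcs : HasCompactSupport φ := HasCompactSupport.intro (isCompact_closedBall 0 1)
    fun w hw => hsupp w (by simpa using hw)
  obtain ⟨B, hB⟩ := hcs.exists_bound_of_continuous hφ
  have hB0 : 0 ≤ B := (norm_nonneg _).trans (hB 0)
  set ω : ℝ := volume.real (ball (0 : EuclideanSpace ℝ (Fin n)) 1) with hω
  have hω0 : 0 < ω := ENNReal.toReal_pos (measure_ball_pos _ _ one_pos).ne' measure_ball_lt_top.ne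
  rw [tendsto_iff_norm_sub_tendsto_zero]
  refine squeeze_zero' (Filter.Eventually.of_forall fun _ => norm_nonneg _) ?_
    (by simpa using hx.const_mul (B * ω))
  filter_upwards [self_mem_nhdsWithin] with t ht
  have ht : 0 < t := ht
  have hcont : Continuous fun z => (t ^ n)⁻¹ * φ (t⁻¹ • (z - x)) := by fun_prop
  have hbd : ∀ z, ‖(t ^ n)⁻¹ * φ (t⁻¹ • (z - x))‖ ≤ (t ^ n)⁻¹ * B := fun z => by
    rw [norm_mul, Real.norm_of_nonneg (by positivity)]
    gcongr; exact hB _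
  have hi1 : Integrable fun z => u z * ((t ^ n)⁻¹ * φ (t⁻¹ • (z - x))) :=
    hu.mul_bdd hcont.aestronglyMeasurable (ae_of_all _ hbd)
  have hφi : Integrable φ := hφ.integrable_of_hasCompactSupport hcs
  have hi2' : Integrable fun z => φ (t⁻¹ • (z - x)) :=
    (hφi.comp_smul (inv_ne_zero ht.ne')).comp_sub_right x
  have hi2 : Integrable fun z => u x * ((t ^ n)⁻¹ * φ (t⁻¹ • (z - x))) :=
    (hi2'.const_mul _).const_mul _
  have hmass : ∫ z, u x * ((t ^ n)⁻¹ * φ (t⁻¹ • (z - x))) = u x := by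
    rw [integral_const_mul, integral_const_mul,
      integral_sub_right_eq_self (fun z => φ (t⁻¹ • z)) x,
      Measure.integral_comp_inv_smul_of_nonneg _ _ ht.le, hone]
    simp only [finrank_euclideanSpace, Fintype.card_fin, smul_eq_mul, mul_one]
    rw [inv_mul_cancel₀ (by positivity), mul_one]
  have hloc : IntegrableOn (fun y => ‖u y - u x‖) (closedBall x t) :=
    (hu.integrableOn.sub (integrableOn_const (measure_closedBall_lt_top.ne))).norm
  have hvol : volume.real (closedBall x t) = t ^ n * ω := by
    rw [Measure.addHaar_real_closedBall _ _ ht.le]; simp [hω]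
  calc ‖(∫ z, u z * ((t ^ n)⁻¹ * φ (t⁻¹ • (z - x)))) - u x‖
      = ‖∫ z, (u z - u x) * ((t ^ n)⁻¹ * φ (t⁻¹ • (z - x)))‖ := by
        simp_rw [sub_mul]
        rw [integral_sub hi1 hi2, hmass]
    _ ≤ ∫ z, (closedBall x t).indicator (fun z => (t ^ n)⁻¹ * B * ‖u z - u x‖) z := by
        refine norm_integral_le_of_norm_le ((integrable_indicator_iff measurableSet_closedBall).2
          (hloc.const_mul _)) (ae_of_all _ fun z => ?_)
        by_cases hz : z ∈ closedBall x t
        · rw [indicator_of_mem hz, norm_mul, mul_comm]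
          gcongr
          exact hbd z
        · rw [indicator_of_notMem hz, hsupp]
          · simp
          · rw [mem_closedBall, not_le, dist_eq_norm] at hz
            rw [norm_smul, norm_inv, Real.norm_of_nonneg ht.le, ← div_eq_inv_mul, lt_div_iff₀ ht]
            linarith
    _ = B * ω * ⨍ y in closedBall x t, ‖u y - u x‖ := by
        rw [integral_indicator measurableSet_closedBall, integral_const_mul, setAverage_eq, hvol,
          smul_eq_mul]
        field_simp

/-- The definition of the weak gradient applied to the test functions
`z ↦ φ((z - x)/t) (z_k - x_k)/t` and summed over `k`. -/
lemma weak_identity {n : ℕ} {Ω : Set (EuclideanSpace ℝ (Fin n))}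
    {f : EuclideanSpace ℝ (Fin n) → ℝ}
    {gf : EuclideanSpace ℝ (Fin n) → EuclideanSpace ℝ (Fin n)} (hw : IsWeakGradOn f gf Ω)
    (hf : IntegrableOn f Ω) (hg : IntegrableOn gf Ω)
    {φ : EuclideanSpace ℝ (Fin n) → ℝ} (hφ : ContDiff ℝ (⊤ : ℕ∞) φ)
    (hsupp : ∀ w, 1 < ‖w‖ → φ w = 0) {x : EuclideanSpace ℝ (Fin n)} {t : ℝ} (ht : 0 < t)
    (hsub : closedBall x t ⊆ Ω) :
    ∫ z in Ω, f z * (t⁻¹ * (n * φ (t⁻¹ • (z - x)) +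
      fderiv ℝ φ (t⁻¹ • (z - x)) (t⁻¹ • (z - x)))) =
    - ∫ z in Ω, φ (t⁻¹ • (z - x)) * inner ℝ (gf z) (t⁻¹ • (z - x)) := by
  have hcs : HasCompactSupport φ := HasCompactSupport.intro (isCompact_closedBall 0 1)
    fun w hw => hsupp w (by simpa using hw)
  have hd : Differentiable ℝ φ := hφ.differentiable (by simp)
  have hφc : Continuous φ := hφ.continuous
  have hdc : Continuous (fderiv ℝ φ) := hφ.continuous_fderiv (by simp)
  set ψ : Fin n → EuclideanSpace ℝ (Fin n) → ℝ :=
    fun k z => φ (t⁻¹ • (z - x)) * (t⁻¹ • (z - x)) k with hψ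
  have hψzero : ∀ k, ∀ z ∉ closedBall x t, ψ k z = 0 := by
    intro k z hz
    rw [mem_closedBall, not_le, dist_eq_norm] at hz
    have : φ (t⁻¹ • (z - x)) = 0 := by
      apply hsupp
      rw [norm_smul, norm_inv, Real.norm_of_nonneg ht.le, ← div_eq_inv_mul, lt_div_iff₀ ht]
      linarith
    simp [hψ, this]
  have hψs : ∀ k, ContDiff ℝ (⊤ : ℕ∞) (ψ k) := by
    intro k
    have h1 : ContDiff ℝ (⊤ : ℕ∞) fun z : EuclideanSpace ℝ (Fin n) => t⁻¹ • (z - x) := by fun_prop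
    exact (hφ.comp h1).mul (((EuclideanSpace.proj (𝕜 := ℝ) k).contDiff).comp h1)
  have hψc : ∀ k, HasCompactSupport (ψ k) := fun k =>
    HasCompactSupport.intro (isCompact_closedBall x t) (hψzero k)
  have hψt : ∀ k, tsupport (ψ k) ⊆ Ω := fun k =>
    (closure_minimal (fun z hz => by
      by_contra h; exact hz (hψzero k z h)) isClosed_closedBall).trans hsub
  have hψd : ∀ k z, fderiv ℝ (ψ k) z (EuclideanSpace.single k 1) =
      t⁻¹ * (φ (t⁻¹ • (z - x)) + fderiv ℝ φ (t⁻¹ • (z - x)) (EuclideanSpace.single k 1) *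
        (t⁻¹ • (z - x)) k) := by
    intro k z
    have h1 : HasFDerivAt (fun z : EuclideanSpace ℝ (Fin n) => t⁻¹ • (z - x))
        (t⁻¹ • ContinuousLinearMap.id ℝ _) z :=
      ((hasFDerivAt_id z).sub_const x).const_smul t⁻¹
    have h2 := (hd (t⁻¹ • (z - x))).hasFDerivAt.comp z h1
    have h3 := (EuclideanSpace.proj (𝕜 := ℝ) k).hasFDerivAt.comp z h1
    have h4 := (h2.mul h3).fderiv
    have h5 : fderiv ℝ (ψ k) z = _ := h4
    rw [h5]
    simp
    ring
  have hsum := Finset.sum_congr rfl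
    fun k (_ : k ∈ Finset.univ) => hw.2.2 (ψ k) (hψs k) (hψc k) (hψt k) k
  have hgk : ∀ k, IntegrableOn (fun z => gf z k) Ω := fun k =>
    (EuclideanSpace.proj (𝕜 := ℝ) k).integrable_comp hg
  rw [Finset.sum_neg_distrib, ← integral_finsetSum, ← integral_finsetSum] at hsum
  · convert hsum using 1
    · refine integral_congr_ae (ae_of_all _ fun z => ?_)
      simp only [hψd]
      rw [← Finset.mul_sum, ← Finset.mul_sum, Finset.sum_add_distrib]
      congr 3
      · simp
      · set w := t⁻¹ • (z - x) with hw'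
        have hexp : w = ∑ k, w k • EuclideanSpace.single k (1 : ℝ) := by
          conv_lhs => rw [← (EuclideanSpace.basisFun (Fin n) ℝ).sum_repr w]
          simp
        calc fderiv ℝ φ w w = fderiv ℝ φ w (∑ k, w k • EuclideanSpace.single k (1 : ℝ)) := by
              rw [← hexp]
          _ = _ := by
              rw [map_sum]
              refine Finset.sum_congr rfl fun k _ => ?_
              rw [map_smul, smul_eq_mul, mul_comm]
    · congr 1
      refine integral_congr_ae (ae_of_all _ fun z => ?_)
      simp only [hψ, PiLp.inner_apply, Finset.mul_sum]
      refine Finset.sum_congr rfl fun k _ => ?_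
      simp
      ring
  · intro k _
    obtain ⟨B, hB⟩ := (hψc k).exists_bound_of_continuous (hψs k).continuous
    exact (hgk k).mul_bdd (hψs k).continuous.aestronglyMeasurable (ae_of_all _ hB)
  · intro k _
    have hc : Continuous (fun z => fderiv ℝ (ψ k) z (EuclideanSpace.single k 1)) :=
      ((hψs k).continuous_fderiv (by simp)).clm_apply continuous_const
    obtain ⟨B, hB⟩ := ((hψc k).fderiv_apply (𝕜 := ℝ) (EuclideanSpace.single k 1)).exists_bound_of_continuous hc
    exact hf.mul_bdd hc.aestronglyMeasurable (ae_of_all _ hB)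

lemma hasDerivAt_pow_inv (n : ℕ) {s : ℝ} (hs : s ≠ 0) :
    HasDerivAt (fun s : ℝ => (s ^ n)⁻¹) (-(s ^ n)⁻¹ * (n * s⁻¹)) s := by
  refine ((hasDerivAt_pow n s).fun_inv (pow_ne_zero _ hs)).congr_deriv ?_
  rcases n with _ | n
  · simp
  · simp only [Nat.add_sub_cancel]
    field_simp
    ring

/-- Derivative in the scale `t` of the average of `f` against the dilated bump
`t⁻ⁿ φ((z - x)/t)`. -/
lemma hasDerivAt_bump_average {n : ℕ} {Ω : Set (EuclideanSpace ℝ (Fin n))}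
    {f : EuclideanSpace ℝ (Fin n) → ℝ} (hf : IntegrableOn f Ω)
    {φ : EuclideanSpace ℝ (Fin n) → ℝ} (hφ : ContDiff ℝ (⊤ : ℕ∞) φ)
    (hsupp : ∀ w, 1 < ‖w‖ → φ w = 0) (x : EuclideanSpace ℝ (Fin n)) {t : ℝ} (ht : 0 < t) :
    HasDerivAt (fun t : ℝ => ∫ z in Ω, f z * ((t ^ n)⁻¹ * φ (t⁻¹ • (z - x))))
      (-(t ^ n)⁻¹ * ∫ z in Ω, f z * (t⁻¹ * (n * φ (t⁻¹ • (z - x)) +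
        fderiv ℝ φ (t⁻¹ • (z - x)) (t⁻¹ • (z - x))))) t := by
  have hcs : HasCompactSupport φ := HasCompactSupport.intro (isCompact_closedBall 0 1)
    fun w hw => hsupp w (by simpa using hw)
  have hd : Differentiable ℝ φ := hφ.differentiable (by simp)
  have hφc : Continuous φ := hφ.continuous
  have hdc : Continuous (fderiv ℝ φ) := hφ.continuous_fderiv (by simp)
  obtain ⟨B, hB⟩ := hcs.exists_bound_of_continuous hφc
  set χ : EuclideanSpace ℝ (Fin n) → ℝ := fun w => n * φ w + fderiv ℝ φ w w with hχ
  have hχc : Continuous χ := by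
    have := hdc.clm_apply continuous_id
    simp only [id] at this
    fun_prop
  have hχs : HasCompactSupport χ := by
    refine hcs.mono' ?_
    intro w hw
    by_contra h
    apply hw
    have h1 : φ w = 0 := image_eq_zero_of_notMem_tsupport h
    have h2 : fderiv ℝ φ w = 0 := image_eq_zero_of_notMem_tsupport
      (fun h' => h (tsupport_fderiv_subset ℝ h'))
    simp [hχ, h1, h2]
  obtain ⟨B', hB'⟩ := hχs.exists_bound_of_continuous hχc
  have hB'0 : 0 ≤ B' := (norm_nonneg _).trans (hB' 0)
  rw [← integral_const_mul]
  refine (hasDerivAt_integral_of_dominated_loc_of_deriv_le (μ := volume.restrict Ω)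
    (F := fun (t : ℝ) z => f z * ((t ^ n)⁻¹ * φ (t⁻¹ • (z - x))))
    (F' := fun (t : ℝ) z => -(t ^ n)⁻¹ * (f z * (t⁻¹ * χ (t⁻¹ • (z - x)))))
    (bound := fun z => ((t / 2) ^ n)⁻¹ * (‖f z‖ * ((t / 2)⁻¹ * B')))
    (s := Ioi (t / 2)) (Ioi_mem_nhds (by linarith)) ?_ ?_ ?_ ?_ ?_ ?_).2
  · refine Filter.Eventually.of_forall fun s => ?_
    exact hf.aestronglyMeasurable.mul (by fun_prop : Continuous _).aestronglyMeasurable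
  · refine hf.mul_bdd (c := |(t ^ n)⁻¹| * B) (by fun_prop : Continuous _).aestronglyMeasurable
      (ae_of_all _ fun z => ?_)
    rw [norm_mul, Real.norm_eq_abs]
    gcongr
    exact hB _
  · exact (hf.aestronglyMeasurable.mul
      (by fun_prop : Continuous _).aestronglyMeasurable).const_mul _
  · refine ae_of_all _ fun z s hs => ?_
    have hs : t / 2 < s := hs
    have hs0 : 0 < s := by linarith
    have h1 : ‖-(s ^ n)⁻¹‖ = (s ^ n)⁻¹ := by rw [norm_neg, Real.norm_of_nonneg (by positivity)]
    have h2 : ‖s⁻¹‖ = s⁻¹ := Real.norm_of_nonneg (by positivity)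
    rw [norm_mul, norm_mul, norm_mul, h1, h2]
    gcongr
    exact hB' _
  · exact (hf.norm.mul_const _).const_mul _
  · refine ae_of_all _ fun z s hs => ?_
    have hs : t / 2 < s := hs
    have hs0 : s ≠ 0 := by linarith
    have h1 : HasDerivAt (fun s : ℝ => s⁻¹) (-(s ^ 2)⁻¹) s := hasDerivAt_inv hs0
    have h2 : HasDerivAt (fun s : ℝ => s⁻¹ • (z - x)) (-(s ^ 2)⁻¹ • (z - x)) s := h1.smul_const _
    have h3 := (hd (s⁻¹ • (z - x))).hasFDerivAt.comp_hasDerivAt s h2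
    have h4 : HasDerivAt (fun s : ℝ => (s ^ n)⁻¹) (-(s ^ n)⁻¹ * (n * s⁻¹)) s := hasDerivAt_pow_inv n hs0
    have h5 := (h4.mul h3).const_mul (f z)
    refine h5.congr_deriv ?_
    have h6 : -(s ^ 2)⁻¹ • (z - x) = (-s⁻¹) • (s⁻¹ • (z - x)) := by
      rw [smul_smul]; congr 1; field_simp
    simp only [Function.comp, h6, map_smul, smul_eq_mul, hχ]
    ring

/-- A Sobolev function at a Lebesgue point differs from its bump average at scale `d` by at most
a constant times `d` times the maximal function of its gradient: the scale derivative of the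
bump average is an average of the gradient. -/
lemma sub_bump_average_le {n : ℕ} {Ω : Set (EuclideanSpace ℝ (Fin n))} (hΩm : MeasurableSet Ω)
    {f : EuclideanSpace ℝ (Fin n) → ℝ}
    {gf : EuclideanSpace ℝ (Fin n) → EuclideanSpace ℝ (Fin n)} (hw : IsWeakGradOn f gf Ω)
    (hf : IntegrableOn f Ω) (hg : IntegrableOn gf Ω) {H : EuclideanSpace ℝ (Fin n) → ℝ≥0∞}
    (hH : ∀ᵐ z ∂(volume.restrict Ω), ‖gf z‖ₑ ≤ H z)
    {φ : EuclideanSpace ℝ (Fin n) → ℝ} (hφ : ContDiff ℝ (⊤ : ℕ∞) φ)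
    (hsupp : ∀ w, 1 < ‖w‖ → φ w = 0) (hone : ∫ w, φ w = 1) {B : ℝ} (hB : ∀ w, ‖φ w‖ ≤ B)
    {x : EuclideanSpace ℝ (Fin n)} (hxΩ : x ∈ Ω)
    (hx : Filter.Tendsto (fun r : ℝ => ⨍ y in closedBall x r, ‖Ω.indicator f y - Ω.indicator f x‖)
      (nhdsWithin 0 (Ioi 0)) (nhds 0))
    {D d : ℝ} (hd : 0 < d) (hdD : d < D) (hM : maxFn D H x < ⊤) (hsub : closedBall x d ⊆ Ω) :
    |f x - ∫ z in Ω, f z * ((d ^ n)⁻¹ * φ (d⁻¹ • (z - x)))| ≤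
      d * (B * 2 ^ n * volume.real (ball (0 : EuclideanSpace ℝ (Fin n)) 1) *
        (maxFn D H x).toReal) := by
  have hB0 : 0 ≤ B := (norm_nonneg _).trans (hB 0)
  set ω : ℝ := volume.real (ball (0 : EuclideanSpace ℝ (Fin n)) 1) with hω
  set K : ℝ := B * 2 ^ n * ω * (maxFn D H x).toReal with hK
  set F : ℝ → ℝ := fun t => ∫ z in Ω, f z * ((t ^ n)⁻¹ * φ (t⁻¹ • (z - x))) with hF
  have hder : ∀ t ∈ Ioc 0 d, ∃ F', HasDerivAt F F' t ∧ ‖F'‖ ≤ K := by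
    intro t ht
    refine ⟨_, hasDerivAt_bump_average hf hφ hsupp x ht.1, ?_⟩
    rw [weak_identity hw hf hg hφ hsupp ht.1 ((closedBall_subset_closedBall ht.2).trans hsub)]
    obtain ⟨r, hr1, hr2⟩ := exists_rat_btwn (lt_min (show t < 2 * t by linarith [ht.1])
      (ht.2.trans_lt hdD))
    have hr0 : (0 : ℝ) < r := ht.1.trans hr1
    have hrle : (r : ℝ) ≤ 2 * t := hr2.le.trans (min_le_left _ _)
    have hrD : (r : ℝ) ≤ D := hr2.le.trans (min_le_right _ _)
    have hv := volume_ball_ne x hr0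
    have hball : ∫⁻ z in ball x r, H z ≤ ENNReal.ofReal ((2 * t) ^ n * ω) * maxFn D H x := by
      have h1 : (volume (ball x (r : ℝ)))⁻¹ * ∫⁻ z in ball x (r : ℝ), H z ≤ maxFn D H x :=
        le_iSup (fun r : {r : ℚ // 0 < r ∧ (r : ℝ) ≤ D} => (volume (ball x (r : ℝ)))⁻¹ *
          ∫⁻ z in ball x (r : ℝ), H z) ⟨r, by exact_mod_cast hr0, hrD⟩
      calc ∫⁻ z in ball x r, H z = volume (ball x (r : ℝ)) *
            ((volume (ball x (r : ℝ)))⁻¹ * ∫⁻ z in ball x (r : ℝ), H z) := by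
            rw [← mul_assoc, ENNReal.mul_inv_cancel hv.1 hv.2, one_mul]
        _ ≤ volume (ball x (r : ℝ)) * maxFn D H x := by gcongr
        _ ≤ _ := by
            gcongr
            rw [Measure.addHaar_ball_of_pos _ _ hr0, ENNReal.ofReal_mul (by have := ht.1; positivity),
              hω, ofReal_measureReal]
            gcongr
            simp only [finrank_euclideanSpace, Fintype.card_fin]
            gcongr
    have hint : ∫⁻ z in Ω, ENNReal.ofReal ‖φ (t⁻¹ • (z - x)) * inner ℝ (gf z) (t⁻¹ • (z - x))‖ ≤
        ENNReal.ofReal (B * ((2 * t) ^ n * ω)) * maxFn D H x := by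
      calc _ ≤ ∫⁻ z in Ω, (ball x (r : ℝ)).indicator (fun z => ENNReal.ofReal B * H z) z := by
            refine lintegral_mono_ae ?_
            filter_upwards [hH] with z hz
            by_cases hzx : ‖t⁻¹ • (z - x)‖ ≤ 1
            · have hzr : z ∈ ball x (r : ℝ) := by
                rw [norm_smul, norm_inv, Real.norm_of_nonneg ht.1.le, ← div_eq_inv_mul,
                  div_le_one ht.1] at hzx
                rw [mem_ball, dist_eq_norm]
                linarith
              rw [indicator_of_mem hzr, norm_mul, ENNReal.ofReal_mul (norm_nonneg _)]
              gcongr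
              · exact hB _
              · refine le_trans ?_ hz
                rw [← ofReal_norm]
                refine ENNReal.ofReal_le_ofReal ((norm_inner_le_norm _ _).trans ?_)
                exact mul_le_of_le_one_right (norm_nonneg _) hzx
            · rw [hsupp _ (not_le.1 hzx)]
              simp
        _ ≤ ∫⁻ z, (ball x (r : ℝ)).indicator (fun z => ENNReal.ofReal B * H z) z :=
            setLIntegral_le_lintegral _ _
        _ = ENNReal.ofReal B * ∫⁻ z in ball x r, H z := by
            rw [lintegral_indicator measurableSet_ball, lintegral_const_mul' _ _ (by finiteness)]
        _ ≤ _ := by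
            rw [ENNReal.ofReal_mul hB0, mul_assoc]
            gcongr
    have hnorm : ‖∫ z in Ω, φ (t⁻¹ • (z - x)) * inner ℝ (gf z) (t⁻¹ • (z - x))‖ ≤
        B * ((2 * t) ^ n * ω) * (maxFn D H x).toReal := by
      refine (norm_integral_le_lintegral_norm _).trans ?_
      refine (ENNReal.toReal_mono (by finiteness) hint).trans ?_
      rw [ENNReal.toReal_mul, ENNReal.toReal_ofReal (by have := ht.1; positivity)]
    have htn : 0 < t ^ n := pow_pos ht.1 n
    rw [norm_mul, norm_neg, norm_neg, Real.norm_of_nonneg (by positivity)]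
    calc _ ≤ (t ^ n)⁻¹ * (B * ((2 * t) ^ n * ω) * (maxFn D H x).toReal) := by gcongr
      _ = K := by rw [hK, mul_pow]; field_simp
  have hK0 : 0 ≤ K := by positivity
  have hle : ∀ s ∈ Ioc 0 d, |F s - F d| ≤ d * K := by
    intro s hs
    have := Convex.norm_image_sub_le_of_norm_hasDerivWithin_le (f := F) (f' := deriv F)
      (s := Icc s d) (C := K) (x := d) (y := s)
      (fun t ht => ((hder t ⟨hs.1.trans_le ht.1, ht.2⟩).choose_spec.1.differentiableAt.hasDerivAt).hasDerivWithinAt)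
      (fun t ht => by
        obtain ⟨F', h1, h2⟩ := hder t ⟨hs.1.trans_le ht.1, ht.2⟩
        rwa [h1.deriv]) (convex_Icc _ _) (right_mem_Icc.2 hs.2) (left_mem_Icc.2 hs.2)
    rw [Real.norm_eq_abs, mul_comm] at this
    refine this.trans ?_
    gcongr
    rw [Real.norm_eq_abs, abs_le]
    constructor <;> linarith [hs.1, hs.2]
  have hlim := tendsto_bump_average (hf.integrable_indicator hΩm) hx hφ.continuous hsupp hone
  rw [indicator_of_mem hxΩ] at hlim
  have heq : ∀ t : ℝ, ∫ z, Ω.indicator f z * ((t ^ n)⁻¹ * φ (t⁻¹ • (z - x))) = F t := by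
    intro t
    simp only [hF]
    rw [← integral_indicator hΩm]
    refine integral_congr_ae (ae_of_all _ fun z => ?_)
    by_cases hz : z ∈ Ω <;> simp [hz]
  simp_rw [heq] at hlim
  refine le_of_tendsto ((hlim.sub_const (F d)).abs) ?_
  filter_upwards [Ioc_mem_nhdsGT hd] with s hs using hle s hs

/-- A mollifier supported in the ball of radius `1/2`, so that its translates by vectors of norm at
most `1/2` are still supported in the unit ball. -/
lemma exists_base_bump (n : ℕ) : ∃ φ : EuclideanSpace ℝ (Fin n) → ℝ,
    ContDiff ℝ (⊤ : ℕ∞) φ ∧ (∀ w, 0 ≤ φ w) ∧ (∀ w, 1 / 2 ≤ ‖w‖ → φ w = 0) ∧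
      ∫ w, φ w = 1 ∧ ∃ B, ∀ w, ‖φ w‖ ≤ B := by
  let b : ContDiffBump (0 : EuclideanSpace ℝ (Fin n)) := ⟨1 / 4, 1 / 2, by norm_num, by norm_num⟩
  refine ⟨b.normed volume, b.contDiff_normed, b.nonneg_normed, ?_, b.integral_normed,
    b.hasCompactSupport_normed.exists_bound_of_continuous b.continuous_normed⟩
  intro w hw
  by_contra h
  have h1 : w ∈ Function.support (b.normed volume) := h
  rw [b.support_normed_eq] at h1
  have h2 : ‖w‖ < 1 / 2 := by simpa [b] using h1
  linarith

lemma ae_lebesgue_point {n : ℕ} {u : EuclideanSpace ℝ (Fin n) → ℝ} (hu : Integrable u) :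
    ∀ᵐ x, Filter.Tendsto (fun r : ℝ => ⨍ y in closedBall x r, ‖u y - u x‖)
      (nhdsWithin 0 (Ioi 0)) (nhds 0) := by
  filter_upwards [(Besicovitch.vitaliFamily volume).ae_tendsto_average_norm_sub
    hu.locallyIntegrable] with x hx
  exact hx.comp (Besicovitch.tendsto_filterAt volume x)

/-! ### From the weak gradient to the pointwise inequality -/

/-- The necessity part: a constant multiple of the maximal function of the gradient serves as
`g`. -/
lemma exists_pointwise_bound_of_weakGrad {n : ℕ} {q : ℝ} (hq : 1 < q)
    {Ω : Set (EuclideanSpace ℝ (Fin n))} (hΩo : IsOpen Ω) (hΩb : Bornology.IsBounded Ω)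
    {f : EuclideanSpace ℝ (Fin n) → ℝ}
    {gf : EuclideanSpace ℝ (Fin n) → EuclideanSpace ℝ (Fin n)}
    (hfm : AEMeasurable f (volume.restrict Ω)) (hfN : grandLNorm q Ω f ≠ ⊤)
    (hw : IsWeakGradOn f gf Ω) (hgN : grandLNorm q Ω (fun x => ‖gf x‖) ≠ ⊤) :
    ∃ g : EuclideanSpace ℝ (Fin n) → ℝ, (∀ x, 0 ≤ g x) ∧
        AEMeasurable g (volume.restrict Ω) ∧ grandLNorm q Ω g ≠ ⊤ ∧
        ∃ S, S ⊆ Ω ∧ volume S = 0 ∧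
          ∀ x ∈ Ω \ S, ∀ y ∈ Ω \ S, ball x (3 * dist x y) ⊆ Ω →
            |f x - f y| ≤ dist x y * (g x + g y) := by
  have hΩm := hΩo.measurableSet
  have hvol : volume Ω ≠ ⊤ := hΩb.measure_lt_top.ne
  have hf : IntegrableOn f Ω := integrableOn_of_grandLNorm hq hvol hfm hfN
  have hgm : AEStronglyMeasurable gf (volume.restrict Ω) := hw.2.1.aestronglyMeasurable
  have hnm : AEMeasurable (fun x => ‖gf x‖) (volume.restrict Ω) := hgm.norm.aemeasurable
  have hg : IntegrableOn gf Ω :=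
    (integrable_norm_iff hgm).1 (integrableOn_of_grandLNorm hq hvol hnm hgN)
  -- a nonnegative Borel representative of `‖∇f‖`, extended by zero
  set h : EuclideanSpace ℝ (Fin n) → ℝ := Ω.indicator fun z => |hnm.mk _ z| with hh
  have hmeas : Measurable h := hnm.measurable_mk.abs.indicator hΩm
  have h0 : ∀ x, 0 ≤ h x := fun x => indicator_nonneg (fun z _ => abs_nonneg _) x
  have hae : ∀ᵐ z ∂(volume.restrict Ω), h z = ‖gf z‖ := by
    filter_upwards [hnm.ae_eq_mk, ae_restrict_mem hΩm] with z hz hzΩ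
    rw [hh, indicator_of_mem hzΩ, ← hz, abs_norm]
  have hsupp : ∀ x ∉ Ω, h x = 0 := fun x hx => indicator_of_notMem hx _
  have hhint : Integrable h := by
    have h1 : IntegrableOn h Ω := hg.norm.congr (hae.mono fun z hz => hz.symm)
    rwa [← integrable_indicator_iff hΩm, hh, indicator_indicator, inter_self] at h1
  have hhN : grandLNorm q Ω h ≠ ⊤ := by
    refine grandLNorm_ne_top_of_le (v := fun x => ‖gf x‖) 1 (hae.mono fun z hz => ?_) hgN
    rw [hz, one_mul]
  set D : ℝ := diam Ω + 1 with hD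
  set H : EuclideanSpace ℝ (Fin n) → ℝ≥0∞ := fun z => ENNReal.ofReal (h z) with hHdef
  have hHae : ∀ᵐ z ∂(volume.restrict Ω), ‖gf z‖ₑ ≤ H z := by
    filter_upwards [hae] with z hz
    rw [hHdef, ← ofReal_norm, ← hz]
  obtain ⟨φ, hφ, -, hφs, hφ1, B, hB⟩ := exists_base_bump n
  have hB0 : 0 ≤ B := (norm_nonneg _).trans (hB 0)
  set C : ℝ := B * 2 ^ n * volume.real (ball (0 : EuclideanSpace ℝ (Fin n)) 1) with hC
  have hC0 : 0 ≤ C := by positivity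
  have hMN := grandLNorm_maxFn_ne_top hq D hvol hmeas h0 hsupp hhN
  have hMm : Measurable fun x => (maxFn D H x).toReal :=
    (measurable_maxFn D hmeas.ennreal_ofReal).ennreal_toReal
  refine ⟨fun x => C * (maxFn D H x).toReal, fun x => by positivity,
    (hMm.const_mul C).aemeasurable,
    grandLNorm_ne_top_of_le C (ae_of_all _ fun x => ?_) hMN, ?_⟩
  · rw [abs_mul, abs_of_nonneg hC0]
  set G : Set (EuclideanSpace ℝ (Fin n)) := {x | Filter.Tendsto
    (fun r : ℝ => ⨍ y in closedBall x r, ‖Ω.indicator f y - Ω.indicator f x‖)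
      (nhdsWithin 0 (Ioi 0)) (nhds 0) ∧ maxFn D H x < ⊤} with hG
  have hGae : ∀ᵐ x, x ∈ G := by
    filter_upwards [ae_lebesgue_point (hf.integrable_indicator hΩm),
      maxFn_ae_lt_top D (h := H) hhint.lintegral_lt_top.ne] with x h1 h2 using ⟨h1, h2⟩
  refine ⟨Ω ∩ Gᶜ, inter_subset_left, measure_mono_null inter_subset_right hGae, ?_⟩
  intro x hx y hy hball
  have hxG : x ∈ G := by by_contra hc; exact hx.2 ⟨hx.1, hc⟩
  have hyG : y ∈ G := by by_contra hc; exact hy.2 ⟨hy.1, hc⟩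
  rcases eq_or_ne x y with rfl | hxy
  · simp
  set d : ℝ := dist x y with hd
  have hd0 : 0 < d := dist_pos.2 hxy
  have hdD : d < D := (dist_le_diam_of_mem hΩb hx.1 hy.1).trans_lt (by linarith)
  have hnv : ∀ a b : EuclideanSpace ℝ (Fin n), dist a b = d →
      ‖(1 / 2 : ℝ) • d⁻¹ • (b - a)‖ ≤ 1 / 2 := by
    intro a b hab
    rw [norm_smul, norm_smul, ← dist_eq_norm, dist_comm, hab, norm_inv, Real.norm_of_nonneg hd0.le,
      inv_mul_cancel₀ hd0.ne']
    norm_num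
  -- the bump at scale `d` around the midpoint, seen as a bump around the endpoint `a`
  have key : ∀ a b : EuclideanSpace ℝ (Fin n), dist a b = d → a ∈ Ω → a ∈ G →
      closedBall a d ⊆ Ω →
      |f a - ∫ z in Ω, f z * ((d ^ n)⁻¹ *
        φ (d⁻¹ • (z - a) - (1 / 2 : ℝ) • d⁻¹ • (b - a)))| ≤
        d * (C * (maxFn D H a).toReal) := by
    intro a b hab haΩ haG hsub
    refine sub_bump_average_le hΩm hw hf hg hHae
      (φ := fun w => φ (w - (1 / 2 : ℝ) • d⁻¹ • (b - a))) (hφ.comp (contDiff_id.sub contDiff_const))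
      ?_ ?_ (fun w => hB _) haΩ haG.1 hd0 hdD haG.2 hsub
    · intro w hw
      apply hφs
      have h1 := norm_sub_norm_le w ((1 / 2 : ℝ) • d⁻¹ • (b - a))
      have h2 := hnv a b hab
      linarith
    · rw [integral_sub_right_eq_self (fun w => φ w), hφ1]
  have hkx := key x y rfl hx.1 hxG
    ((closedBall_subset_ball (by linarith)).trans hball)
  have hky := key y x (dist_comm y x) hy.1 hyG (by
    refine (closedBall_subset_ball' ?_).trans hball
    rw [dist_comm y x]
    linarith)
  have hsame : ∀ z, d⁻¹ • (z - x) - (1 / 2 : ℝ) • d⁻¹ • (y - x) =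
      d⁻¹ • (z - y) - (1 / 2 : ℝ) • d⁻¹ • (x - y) := by
    intro z; module
  simp_rw [hsame] at hkx
  rw [abs_le] at *
  constructor <;> nlinarith [hkx.1, hkx.2, hky.1, hky.2]

/-! ### From the pointwise inequality to the weak gradient -/

lemma integral_mul_comp_sub {n : ℕ} (w ψ : EuclideanSpace ℝ (Fin n) → ℝ)
    (a : EuclideanSpace ℝ (Fin n)) :
    ∫ z, w z * ψ (z - a) = ∫ z, w (z + a) * ψ z := by
  rw [← integral_add_right_eq_self (fun z => w z * ψ (z - a)) a]
  simp

/-- Difference quotients, shifted onto the test function by a change of variables, turn the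
pointwise inequality into a bound for the distributional derivative of `f`. -/
lemma abs_integral_fderiv_le {n : ℕ} {Ω : Set (EuclideanSpace ℝ (Fin n))} (hΩo : IsOpen Ω)
    {f g : EuclideanSpace ℝ (Fin n) → ℝ} (hf : IntegrableOn f Ω) (hg : IntegrableOn g Ω)
    {S : Set (EuclideanSpace ℝ (Fin n))} (hS : volume S = 0)
    (hpt : ∀ x ∈ Ω \ S, ∀ y ∈ Ω \ S, ball x (3 * dist x y) ⊆ Ω →
      |f x - f y| ≤ dist x y * (g x + g y))
    {φ : EuclideanSpace ℝ (Fin n) → ℝ} (hφ : ContDiff ℝ (⊤ : ℕ∞) φ) (hcs : HasCompactSupport φ)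
    (hsub : tsupport φ ⊆ Ω) {e : EuclideanSpace ℝ (Fin n)} (he : ‖e‖ = 1) :
    |∫ x in Ω, f x * fderiv ℝ φ x e| ≤ 2 * ∫ x in Ω, g x * |φ x| := by
  have hΩm := hΩo.measurableSet
  have hd : Differentiable ℝ φ := hφ.differentiable (by simp)
  have hφc : Continuous φ := hφ.continuous
  obtain ⟨B, hB⟩ := hcs.exists_bound_of_continuous hφc
  obtain ⟨L, hL⟩ := (hcs.fderiv ℝ).exists_bound_of_continuous (hφ.continuous_fderiv (by simp))
  set u := Ω.indicator f with hu
  set v := Ω.indicator g with hv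
  have hui : Integrable u := hf.integrable_indicator hΩm
  have hvi : Integrable v := hg.integrable_indicator hΩm
  obtain ⟨δ, hδ, hδΩ⟩ := hcs.isCompact.exists_thickening_subset_open hΩo hsub
  have hlip : ∀ z t, 0 < t → |φ z - φ (z - t • e)| ≤ L * t := by
    intro z t ht
    have := Convex.norm_image_sub_le_of_norm_fderiv_le (𝕜 := ℝ) (f := φ) (s := univ) (C := L)
      (x := z - t • e) (y := z) (fun x _ => hd x) (fun x _ => hL x) convex_univ trivial trivial
    rwa [_root_.sub_sub_cancel, norm_smul, he, mul_one, Real.norm_of_nonneg ht.le, Real.norm_eq_abs] at this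
  have hintw : ∀ w, Integrable w → ∀ ψ : EuclideanSpace ℝ (Fin n) → ℝ, Continuous ψ →
      (∀ z, ‖ψ z‖ ≤ B) → Integrable fun z => w z * ψ z :=
    fun w hw ψ hψ hb => hw.mul_bdd hψ.aestronglyMeasurable (ae_of_all _ hb)
  -- the inequality at a fixed small step `t`
  have hstep : ∀ t ∈ Ioo 0 (δ / 3), |∫ z, u z * (t⁻¹ * (φ z - φ (z - t • e)))| ≤
      ∫ z, v z * (|φ z| + |φ (z - t • e)|) := by
    intro t ht
    have ht0 := ht.1
    have hsh : Continuous fun z => φ (z - t • e) := by fun_prop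
    have h1 : ∫ z, u z * (t⁻¹ * (φ z - φ (z - t • e))) =
        ∫ z, t⁻¹ * ((u z - u (z + t • e)) * φ z) := by
      rw [integral_const_mul]
      simp_rw [sub_mul]
      rw [integral_sub (hintw u hui φ hφc hB)
        (hintw _ (hui.comp_add_right (t • e)) φ hφc hB), ← integral_mul_comp_sub u φ,
        ← integral_sub (hintw u hui φ hφc hB) (hintw u hui _ hsh fun z => hB _),
        ← integral_const_mul]
      congr 1; ext z; ring
    have h2 : ∫ z, v z * (|φ z| + |φ (z - t • e)|) = ∫ z, (v z + v (z + t • e)) * |φ z| := by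
      simp_rw [mul_add, add_mul]
      have hb : ∀ z, ‖|φ z|‖ ≤ B := fun z => by rw [Real.norm_eq_abs, abs_abs]; exact hB z
      rw [integral_add (hintw v hvi _ hφc.abs hb) (hintw v hvi _ hsh.abs fun z => hb _),
        integral_add (hintw v hvi _ hφc.abs hb)
          (hintw _ (hvi.comp_add_right (t • e)) _ hφc.abs hb),
        integral_mul_comp_sub v fun z => |φ z|]
    rw [h1, h2, ← Real.norm_eq_abs]
    have hS1 : ∀ᵐ z, z ∉ S := measure_eq_zero_iff_ae_notMem.1 hS
    have hS2 : ∀ᵐ z, z + t • e ∉ S :=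
      (measurePreserving_add_right volume (t • e)).quasiMeasurePreserving.ae hS1
    refine norm_integral_le_of_norm_le ?_ ?_
    · refine hintw _ (hvi.add (hvi.comp_add_right (t • e))) _ hφc.abs fun z => ?_
      rw [Real.norm_eq_abs, abs_abs]; exact hB z
    filter_upwards [hS1, hS2] with z hz1 hz2
    by_cases hz : z ∈ tsupport φ
    · have hball : ball z δ ⊆ Ω := (ball_subset_thickening hz δ).trans hδΩ
      have hdist : dist z (z + t • e) = t := by
        rw [dist_self_add_right, norm_smul, he, mul_one, Real.norm_of_nonneg ht0.le]
      have hzΩ : z ∈ Ω := hsub hz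
      have hz' : z + t • e ∈ Ω := hball (by
        rw [mem_ball, dist_comm, hdist]; linarith [ht.2])
      have := hpt z ⟨hzΩ, hz1⟩ _ ⟨hz', hz2⟩ (by
        rw [hdist]; exact (ball_subset_ball (by linarith [ht.2])).trans hball)
      rw [hdist] at this
      rw [hu, hv, indicator_of_mem hzΩ, indicator_of_mem hz', indicator_of_mem hzΩ,
        indicator_of_mem hz', norm_mul, norm_mul, norm_inv, Real.norm_of_nonneg ht0.le, ← mul_assoc]
      rw [Real.norm_eq_abs, Real.norm_eq_abs]
      gcongr
      rw [inv_mul_le_iff₀ ht0]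
      exact this
    · rw [image_eq_zero_of_notMem_tsupport hz]
      simp
  have hpos : Ioo 0 (δ / 3) ∈ nhdsWithin (0 : ℝ) (Ioi 0) := Ioo_mem_nhdsGT (by linarith)
  have hlim1 : Filter.Tendsto (fun t : ℝ => ∫ z, u z * (t⁻¹ * (φ z - φ (z - t • e))))
      (nhdsWithin 0 (Ioi 0)) (nhds (∫ z, u z * fderiv ℝ φ z e)) := by
    refine tendsto_integral_filter_of_dominated_convergence (fun z => ‖u z‖ * L) ?_ ?_
      (hui.norm.mul_const L) ?_
    · refine Filter.Eventually.of_forall fun t => hui.aestronglyMeasurable.mul ?_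
      exact (by fun_prop : Continuous _).aestronglyMeasurable
    · filter_upwards [hpos] with t ht
      refine ae_of_all _ fun z => ?_
      have ht0 := ht.1
      rw [norm_mul, norm_mul, norm_inv, Real.norm_of_nonneg ht0.le]
      gcongr
      rw [inv_mul_le_iff₀ ht0, mul_comm]
      exact hlip z t ht0
    · refine ae_of_all _ fun z => Filter.Tendsto.const_mul _ ?_
      have h0 : HasDerivAt (fun t : ℝ => z - t • e) (-((1 : ℝ) • e)) 0 :=
        ((hasDerivAt_id (0 : ℝ)).smul_const e).const_sub z
      have h1 : HasFDerivAt φ (fderiv ℝ φ z) (z - (0 : ℝ) • e) := by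
        simpa using (hd z).hasFDerivAt
      have h2 := (h1.comp_hasDerivAt (0 : ℝ) h0).const_sub (φ z)
      have h3 := h2.tendsto_slope_zero_right
      simpa using h3
  have hlim2 : Filter.Tendsto (fun t : ℝ => ∫ z, v z * (|φ z| + |φ (z - t • e)|))
      (nhdsWithin 0 (Ioi 0)) (nhds (∫ z, v z * (|φ z| + |φ z|))) := by
    refine tendsto_integral_filter_of_dominated_convergence (fun z => ‖v z‖ * (B + B)) ?_ ?_
      (hvi.norm.mul_const _) ?_
    · refine Filter.Eventually.of_forall fun t => hvi.aestronglyMeasurable.mul ?_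
      exact (by fun_prop : Continuous _).aestronglyMeasurable
    · refine Filter.Eventually.of_forall fun t => ae_of_all _ fun z => ?_
      rw [norm_mul, Real.norm_of_nonneg (by positivity : 0 ≤ |φ z| + |φ (z - t • e)|)]
      gcongr
      exacts [hB _, hB _]
    · refine ae_of_all _ fun z => ?_
      have hc : Continuous fun t : ℝ => v z * (|φ z| + |φ (z - t • e)|) := by fun_prop
      have := hc.tendsto 0
      simp only [zero_smul, sub_zero] at this
      exact this.mono_left nhdsWithin_le_nhds
  have hfin := le_of_tendsto_of_tendsto hlim1.abs hlim2
    (by filter_upwards [hpos] with t ht using hstep t ht)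
  have h3 : ∫ z, u z * fderiv ℝ φ z e = ∫ x in Ω, f x * fderiv ℝ φ x e := by
    rw [← integral_indicator hΩm]
    congr 1; ext z
    by_cases hz : z ∈ Ω <;> simp [hu, hz]
  have h4 : ∫ z, v z * (|φ z| + |φ z|) = 2 * ∫ x in Ω, g x * |φ x| := by
    rw [← integral_const_mul, ← integral_indicator hΩm]
    congr 1; ext z
    by_cases hz : z ∈ Ω
    · simp [hv, hz]; ring
    · simp [hv, hz]
  rwa [h3, h4] at hfin

/-- Smooth functions with compact support inside `Ω`. The support condition is phrased as
vanishing off a compact subset of `Ω`. -/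
def testSpace {n : ℕ} (Ω : Set (EuclideanSpace ℝ (Fin n))) :
    Submodule ℝ (EuclideanSpace ℝ (Fin n) → ℝ) where
  carrier := {φ | ContDiff ℝ (⊤ : ℕ∞) φ ∧ ∃ K, IsCompact K ∧ K ⊆ Ω ∧ ∀ x ∉ K, φ x = 0}
  add_mem' := by
    rintro a b ⟨ha, K, hK, hKΩ, hKa⟩ ⟨hb, L, hL, hLΩ, hLb⟩
    refine ⟨ha.add hb, K ∪ L, hK.union hL, union_subset hKΩ hLΩ, fun x hx => ?_⟩
    rw [mem_union, not_or] at hx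
    simp [hKa x hx.1, hLb x hx.2]
  zero_mem' := ⟨contDiff_const, ∅, isCompact_empty, empty_subset _, fun x _ => rfl⟩
  smul_mem' := by
    rintro c a ⟨ha, K, hK, hKΩ, hKa⟩
    exact ⟨contDiff_const.smul ha, K, hK, hKΩ, fun x hx => by simp [hKa x hx]⟩

lemma testSpace_hasCompactSupport {n : ℕ} {Ω : Set (EuclideanSpace ℝ (Fin n))}
    (φ : testSpace Ω) : HasCompactSupport φ.1 := by
  obtain ⟨-, K, hK, -, hK0⟩ := φ.2
  exact HasCompactSupport.intro hK hK0

lemma testSpace_tsupport_subset {n : ℕ} {Ω : Set (EuclideanSpace ℝ (Fin n))}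
    (φ : testSpace Ω) : tsupport φ.1 ⊆ Ω := by
  obtain ⟨-, K, hK, hKΩ, hK0⟩ := φ.2
  refine (closure_minimal ?_ hK.isClosed).trans hKΩ
  intro x hx
  by_contra h
  exact hx (hK0 x h)

/-- The bound `|∫ f ∂ₑφ| ≤ 2 ∫ g |φ|` makes the distributional derivative of `f` a bounded
functional of `φ √g ∈ L²(Ω)`, so by Riesz representation it is an integrable function. -/
lemma exists_weak_deriv {n : ℕ} {Ω : Set (EuclideanSpace ℝ (Fin n))}
    {f g : EuclideanSpace ℝ (Fin n) → ℝ} (hf : IntegrableOn f Ω) (hg : IntegrableOn g Ω)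
    (hg0 : ∀ x, 0 ≤ g x) (e : EuclideanSpace ℝ (Fin n))
    (hbd : ∀ φ ∈ testSpace Ω, |∫ x in Ω, f x * fderiv ℝ φ x e| ≤ 2 * ∫ x in Ω, g x * |φ x|) :
    ∃ F : EuclideanSpace ℝ (Fin n) → ℝ, IntegrableOn F Ω ∧
      ∀ φ ∈ testSpace Ω, ∫ x in Ω, f x * fderiv ℝ φ x e = - ∫ x in Ω, F x * φ x := by
  set μ := volume.restrict Ω with hμ
  set s : EuclideanSpace ℝ (Fin n) → ℝ := fun x => √(g x) with hs
  have hsm : AEStronglyMeasurable s μ := hg.aestronglyMeasurable.aemeasurable.sqrt.aestronglyMeasurable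
  have hsq : ∀ x, s x ^ 2 = g x := fun x => Real.sq_sqrt (hg0 x)
  have hs2 : MemLp s 2 μ := by
    rw [memLp_two_iff_integrable_sq hsm]
    simp_rw [hsq]
    exact hg
  have hmem : ∀ φ : EuclideanSpace ℝ (Fin n) → ℝ, Continuous φ → HasCompactSupport φ →
      MemLp (fun x => φ x * s x) 2 μ := by
    intro φ hφ hc
    obtain ⟨B, hB⟩ := hc.exists_bound_of_continuous hφ
    exact hs2.of_le_mul (c := B) (hφ.aestronglyMeasurable.mul hsm) (ae_of_all _ fun x => by
      rw [norm_mul]; gcongr; exact hB x)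
  have hmem' : ∀ φ : testSpace Ω, MemLp (fun x => φ.1 x * s x) 2 μ := fun φ =>
    hmem _ φ.2.1.continuous (testSpace_hasCompactSupport φ)
  let ι : testSpace Ω →ₗ[ℝ] Lp ℝ 2 μ :=
    { toFun := fun φ => (hmem' φ).toLp
      map_add' := fun φ ψ => by
        rw [← MemLp.toLp_add]
        refine MemLp.toLp_congr _ _ (ae_of_all _ fun x => ?_)
        simp [add_mul]
      map_smul' := fun c φ => by
        rw [RingHom.id_apply, ← MemLp.toLp_const_smul]
        refine MemLp.toLp_congr _ _ (ae_of_all _ fun x => ?_)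
        simp [mul_assoc] }
  have hint : ∀ φ : testSpace Ω, Integrable (fun x => f x * fderiv ℝ φ.1 x e) μ := by
    intro φ
    have hc : Continuous fun x => fderiv ℝ φ.1 x e :=
      (φ.2.1.continuous_fderiv (by simp)).clm_apply continuous_const
    obtain ⟨B, hB⟩ := ((testSpace_hasCompactSupport φ).fderiv_apply ℝ e).exists_bound_of_continuous hc
    exact hf.mul_bdd hc.aestronglyMeasurable (ae_of_all _ hB)
  have hdiff : ∀ (φ : testSpace Ω) x, DifferentiableAt ℝ φ.1 x := fun φ x =>
    φ.2.1.differentiable (by simp) x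
  let Λ : testSpace Ω →ₗ[ℝ] ℝ :=
    { toFun := fun φ => ∫ x, f x * fderiv ℝ φ.1 x e ∂μ
      map_add' := fun φ ψ => by
        rw [← integral_add (hint φ) (hint ψ)]
        refine integral_congr_ae (ae_of_all _ fun x => ?_)
        have : fderiv ℝ (φ + ψ).1 x = fderiv ℝ φ.1 x + fderiv ℝ ψ.1 x :=
          fderiv_add (hdiff φ x) (hdiff ψ x)
        simp only [this, add_apply]
        ring
      map_smul' := fun c φ => by
        rw [RingHom.id_apply, smul_eq_mul, ← integral_const_mul]
        refine integral_congr_ae (ae_of_all _ fun x => ?_)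
        have : fderiv ℝ (c • φ).1 x = c • fderiv ℝ φ.1 x :=
          fderiv_const_smul (hdiff φ x) c
        simp only [this, smul_apply, smul_eq_mul]
        ring }
  have hbound : ∃ C : ℝ, ∀ φ, ‖Λ φ‖ ≤ C * ‖ι φ‖ := by
    refine ⟨2 * ‖hs2.toLp‖, fun φ => ?_⟩
    have habs : MemLp (fun x => |φ.1 x| * s x) 2 μ :=
      hmem _ φ.2.1.continuous.abs (testSpace_hasCompactSupport φ).abs
    have h1 : ∫ x in Ω, g x * |φ.1 x| = inner ℝ hs2.toLp habs.toLp := by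
      rw [L2.inner_def]
      refine integral_congr_ae ?_
      filter_upwards [hs2.coeFn_toLp, habs.coeFn_toLp] with x hx1 hx2
      rw [hx1, hx2, ← hsq]
      simp
      ring
    have h2 : ‖habs.toLp‖ = ‖ι φ‖ := by
      change _ = ‖(hmem' φ).toLp‖
      rw [Lp.norm_toLp, Lp.norm_toLp]
      congr 1
      refine eLpNorm_congr_norm_ae (ae_of_all _ fun x => ?_)
      simp
    rw [Real.norm_eq_abs, mul_assoc, ← h2]
    refine (hbd φ.1 φ.2).trans ?_
    rw [h1]
    gcongr
    exact real_inner_le_norm _ _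
  obtain ⟨T, hT, -⟩ := exists_extension_norm_eq (LinearMap.range ι) (Λ.compLeftInverse ι)
  set w : Lp ℝ 2 μ := (InnerProductSpace.toDual ℝ (Lp ℝ 2 μ)).symm T with hw
  refine ⟨fun x => -(w x * s x), ((Lp.memLp w).integrable_mul hs2).neg, fun φ hφ => ?_⟩
  have h1 : Λ ⟨φ, hφ⟩ = T (ι ⟨φ, hφ⟩) := by
    rw [← LinearMap.compLeftInverse_apply_of_bdd Λ ι hbound ⟨φ, hφ⟩ _ rfl, ← hT]
  have h2 : T (ι ⟨φ, hφ⟩) = ∫ x, w x * s x * φ x ∂μ := by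
    rw [← InnerProductSpace.toDual_symm_apply, L2.inner_def]
    refine integral_congr_ae ?_
    filter_upwards [(hmem' ⟨φ, hφ⟩).coeFn_toLp] with x hx
    change inner ℝ (w x) ((hmem' ⟨φ, hφ⟩).toLp _ x) = _
    rw [hx]
    simp
    ring
  rw [h2] at h1
  refine h1.trans ?_
  rw [← integral_neg]
  simp

/-- Testing with shrinking bumps at common Lebesgue points turns the integral bound into the
pointwise bound `|F| ≤ 2 g`. -/
lemma ae_abs_le_of_weak_bound {n : ℕ} {Ω : Set (EuclideanSpace ℝ (Fin n))} (hΩo : IsOpen Ω)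
    {F g : EuclideanSpace ℝ (Fin n) → ℝ} (hF : IntegrableOn F Ω) (hg : IntegrableOn g Ω)
    (hbd : ∀ φ ∈ testSpace Ω, |∫ x in Ω, F x * φ x| ≤ 2 * ∫ x in Ω, g x * |φ x|) :
    ∀ᵐ x ∂(volume.restrict Ω), |F x| ≤ 2 * g x := by
  have hΩm := hΩo.measurableSet
  obtain ⟨φ, hφ, hφ0, hφs, hφ1, -⟩ := exists_base_bump n
  have hφs' : ∀ w, 1 < ‖w‖ → φ w = 0 := fun w hw => hφs w (by linarith)
  rw [ae_restrict_iff' hΩm]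
  filter_upwards [ae_lebesgue_point (hF.integrable_indicator hΩm),
    ae_lebesgue_point (hg.integrable_indicator hΩm)] with x hxF hxg hx
  have h1 := tendsto_bump_average (hF.integrable_indicator hΩm) hxF hφ.continuous hφs' hφ1
  have h2 := tendsto_bump_average (hg.integrable_indicator hΩm) hxg hφ.continuous hφs' hφ1
  rw [indicator_of_mem hx] at h1 h2
  refine le_of_tendsto_of_tendsto h1.abs (h2.const_mul 2) ?_
  obtain ⟨δ, hδ, hδΩ⟩ := Metric.nhds_basis_closedBall.mem_iff.1 (hΩo.mem_nhds hx)
  filter_upwards [Ioc_mem_nhdsGT hδ] with t ht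
  have ht0 := ht.1
  have hmem : (fun z => (t ^ n)⁻¹ * φ (t⁻¹ • (z - x))) ∈ testSpace Ω := by
    refine ⟨contDiff_const.mul (hφ.comp ((contDiff_id.sub contDiff_const).const_smul t⁻¹)),
      closedBall x t, isCompact_closedBall _ _, (closedBall_subset_closedBall ht.2).trans hδΩ,
      fun z hz => ?_⟩
    change (t ^ n)⁻¹ * φ (t⁻¹ • (z - x)) = 0
    rw [hφs', mul_zero]
    rw [mem_closedBall, not_le, dist_eq_norm] at hz
    rw [norm_smul, norm_inv, Real.norm_of_nonneg ht0.le, ← div_eq_inv_mul, one_lt_div ht0]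
    exact hz
  have heq : ∀ u : EuclideanSpace ℝ (Fin n) → ℝ,
      ∫ z, Ω.indicator u z * ((t ^ n)⁻¹ * φ (t⁻¹ • (z - x))) =
        ∫ z in Ω, u z * ((t ^ n)⁻¹ * φ (t⁻¹ • (z - x))) := by
    intro u
    rw [← integral_indicator hΩm]
    congr 1; ext z
    by_cases hz : z ∈ Ω <;> simp [hz]
  have h3 := hbd _ hmem
  simp only [abs_of_nonneg (mul_nonneg (inv_nonneg.2 (pow_nonneg ht0.le n)) (hφ0 _))] at h3
  rw [heq, heq]
  exact h3

/-- The sufficiency part: the weak partial derivatives exist as integrable functions and are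
dominated by `2 g`, hence lie in the grand Lebesgue space with `g`. -/
lemma exists_weakGrad_of_pointwise_bound {n : ℕ} {q : ℝ} (hq : 1 < q)
    {Ω : Set (EuclideanSpace ℝ (Fin n))} (hΩo : IsOpen Ω) (hΩb : Bornology.IsBounded Ω)
    {f g : EuclideanSpace ℝ (Fin n) → ℝ}
    (hfm : AEMeasurable f (volume.restrict Ω)) (hfN : grandLNorm q Ω f ≠ ⊤)
    (hg0 : ∀ x, 0 ≤ g x) (hgm : AEMeasurable g (volume.restrict Ω)) (hgN : grandLNorm q Ω g ≠ ⊤)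
    {S : Set (EuclideanSpace ℝ (Fin n))} (hS : volume S = 0)
    (hpt : ∀ x ∈ Ω \ S, ∀ y ∈ Ω \ S, ball x (3 * dist x y) ⊆ Ω →
      |f x - f y| ≤ dist x y * (g x + g y)) :
    ∃ gf, IsWeakGradOn f gf Ω ∧ grandSobNorm q Ω f gf ≠ ⊤ := by
  have hvol : volume Ω ≠ ⊤ := hΩb.measure_lt_top.ne
  have hf : IntegrableOn f Ω := integrableOn_of_grandLNorm hq hvol hfm hfN
  have hg : IntegrableOn g Ω := integrableOn_of_grandLNorm hq hvol hgm hgN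
  have hbd : ∀ k : Fin n, ∀ φ ∈ testSpace Ω,
      |∫ x in Ω, f x * fderiv ℝ φ x (EuclideanSpace.single k 1)| ≤ 2 * ∫ x in Ω, g x * |φ x| :=
    fun k φ hφ => abs_integral_fderiv_le hΩo hf hg hS hpt hφ.1
      (testSpace_hasCompactSupport ⟨φ, hφ⟩) (testSpace_tsupport_subset ⟨φ, hφ⟩) (by simp)
  choose F hF hFw using fun k : Fin n => exists_weak_deriv hf hg hg0 _ (hbd k)
  have hFle : ∀ k, ∀ᵐ x ∂(volume.restrict Ω), |F k x| ≤ 2 * g x := fun k =>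
    ae_abs_le_of_weak_bound hΩo (hF k) hg fun φ hφ => by
      have := hbd k φ hφ
      rwa [hFw k φ hφ, abs_neg] at this
  set gf : EuclideanSpace ℝ (Fin n) → EuclideanSpace ℝ (Fin n) :=
    fun x => ∑ k, F k x • EuclideanSpace.single k (1 : ℝ) with hgf
  have hgfk : ∀ x k, gf x k = F k x := by
    intro x k
    simp [hgf, Finset.sum_apply, Pi.single_apply]
  have hgfi : IntegrableOn gf Ω := integrable_finsetSum _ fun k _ => (hF k).smul_const _
  refine ⟨gf, ⟨hf.locallyIntegrableOn, hgfi.locallyIntegrableOn, fun φ hφ hc hsub k => ?_⟩, ?_⟩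
  · simp_rw [hgfk]
    exact hFw k φ ⟨hφ, tsupport φ, hc, hsub, fun x hx => image_eq_zero_of_notMem_tsupport hx⟩
  · refine grandSobNorm_ne_top_iff.2 ⟨hfN, grandLNorm_ne_top_of_le (v := g) (n * 2) ?_ hgN⟩
    filter_upwards [ae_all_iff.2 hFle] with x hx
    rw [abs_norm, abs_of_nonneg (hg0 x)]
    calc ‖gf x‖ ≤ ∑ k, ‖F k x • EuclideanSpace.single k (1 : ℝ)‖ := norm_sum_le _ _
      _ ≤ ∑ _k : Fin n, 2 * g x := by
          refine Finset.sum_le_sum fun k _ => ?_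
          rw [norm_smul]
          simpa using hx k
      _ = n * 2 * g x := by simp [mul_assoc]

/-! ### The characterization -/

/-- for `1 < q < ∞` and a bounded domain `Ω ⊂ ℝⁿ`, a function `f`
belongs to the grand Sobolev space `W^{1,q)}(Ω)` iff `f ∈ L^{q)}(Ω)` and there
are a nonnegative `g ∈ L^{q)}(Ω)` and a null set `S ⊆ Ω` such that
`|f(x) − f(y)| ≤ |x−y|(g(x)+g(y))` for all `x, y ∈ Ω ∖ S` with
`B(x,3|x−y|) ⊆ Ω`. -/
theorem pointwise_characterization_grand_sobolev {n : ℕ} (q : ℝ) (hq : 1 < q)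
    (Ω : Set (EuclideanSpace ℝ (Fin n))) (hΩ_open : IsOpen Ω)
    (hΩ_conn : IsConnected Ω) (hΩ_bdd : Bornology.IsBounded Ω)
    (f : EuclideanSpace ℝ (Fin n) → ℝ) :
    ((AEMeasurable f (volume.restrict Ω) ∧ grandLNorm q Ω f ≠ ⊤) ∧
      ∃ gf, IsWeakGradOn f gf Ω ∧ grandSobNorm q Ω f gf ≠ ⊤) ↔
    ((AEMeasurable f (volume.restrict Ω) ∧ grandLNorm q Ω f ≠ ⊤) ∧
      ∃ g : EuclideanSpace ℝ (Fin n) → ℝ, (∀ x, 0 ≤ g x) ∧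
        AEMeasurable g (volume.restrict Ω) ∧ grandLNorm q Ω g ≠ ⊤ ∧
        ∃ S, S ⊆ Ω ∧ volume S = 0 ∧
          ∀ x ∈ Ω \ S, ∀ y ∈ Ω \ S, ball x (3 * dist x y) ⊆ Ω →
            |f x - f y| ≤ dist x y * (g x + g y)) := by
  constructor
  · rintro ⟨⟨hfm, hfN⟩, gf, hw, hN⟩
    exact ⟨⟨hfm, hfN⟩, exists_pointwise_bound_of_weakGrad hq hΩ_open hΩ_bdd hfm hfN hw
      (grandSobNorm_ne_top_iff.1 hN).2⟩
  · rintro ⟨⟨hfm, hfN⟩, g, hg0, hgm, hgN, S, -, hS, hpt⟩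
    exact ⟨⟨hfm, hfN⟩, exists_weakGrad_of_pointwise_bound hq hΩ_open hΩ_bdd hfm hfN hg0 hgm hgN
      hS hpt⟩
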